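/- arXiv:2509.24583 — 3 statements merged into one kernel-verified Lean document; each statement's English description precedes it below -/
import Mathlib

section
/- For all modal μ-calculus formulae φ, φ' over signature σ and every n ∈ ℕ, the following are equivalent: (1) φ and φ' are joint ≈^n_σ-consistent over T^2; (2) φ and φ' are joint ≅^n_σ-consistent over T^2. -/
/-- Formulae of the modal μ-calculus (in negation normal form). -/
inductive Form : Type
  | pos : ℕ → Form
  | neg : ℕ → Form
  | or  : Form → Form → Form
  | and : Form → Form → Form
  | dia : Form → Form
  | box : Form → Form
  | var : ℕ → Form
  | mu  : ℕ → Form → Form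
  | nu  : ℕ → Form → Form

namespace Form

/-- Fixpoint-free formulae: modal logic ML. -/
def IsML : Form → Prop
  | pos _ => True
  | neg _ => True
  | or φ ψ => IsML φ ∧ IsML ψ
  | and φ ψ => IsML φ ∧ IsML ψ
  | dia φ => IsML φ
  | box φ => IsML φ
  | var _ => False
  | mu _ _ => False
  | nu _ _ => False

/-- Modal depth: maximal nesting of ◇ and □. -/
def depth : Form → ℕ
  | pos _ => 0
  | neg _ => 0
  | or φ ψ => max φ.depth ψ.depth
  | and φ ψ => max φ.depth ψ.depth
  | dia φ => φ.depth + 1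
  | box φ => φ.depth + 1
  | var _ => 0
  | mu _ φ => φ.depth
  | nu _ φ => φ.depth

/-- The set of propositions occurring in a formula. -/
def sig : Form → Set ℕ
  | pos p => {p}
  | neg p => {p}
  | or φ ψ => φ.sig ∪ ψ.sig
  | and φ ψ => φ.sig ∪ ψ.sig
  | dia φ => φ.sig
  | box φ => φ.sig
  | var _ => ∅
  | mu _ φ => φ.sig
  | nu _ φ => φ.sig

/-- The size of a formula (its length as a string, up to a constant factor). -/
def size : Form → ℕ
  | pos _ => 1
  | neg _ => 2
  | or φ ψ => φ.size + ψ.size + 1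
  | and φ ψ => φ.size + ψ.size + 1
  | dia φ => φ.size + 1
  | box φ => φ.size + 1
  | var _ => 1
  | mu _ φ => φ.size + 2
  | nu _ φ => φ.size + 2

end Form

/-- A set has at least `g` elements. -/
def AtLeastCard {W : Type} (g : ℕ) (S : Set W) : Prop :=
  ∃ f : Fin g → W, Function.Injective f ∧ ∀ i, f i ∈ S

/-- Pointed Kripke structures. -/
structure Model : Type 1 where
  W : Type
  root : W
  R : W → W → Prop
  val : W → ℕ → Prop

namespace Model

/-- Semantics of the μ-calculus, via Knaster–Tarski style clauses. -/
def interp (M : Model) : Form → (ℕ → Set M.W) → Set M.W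
  | .pos p, _ => {w | M.val w p}
  | .neg p, _ => {w | ¬ M.val w p}
  | .or φ ψ, e => M.interp φ e ∪ M.interp ψ e
  | .and φ ψ, e => M.interp φ e ∩ M.interp ψ e
  | .dia φ, e => {w | ∃ v, M.R w v ∧ v ∈ M.interp φ e}
  | .box φ, e => {w | ∀ v, M.R w v → v ∈ M.interp φ e}
  | .var x, e => e x
  | .mu x φ, e => sInf {S : Set M.W | M.interp φ (Function.update e x S) ⊆ S}
  | .nu x φ, e => sSup {S : Set M.W | S ⊆ M.interp φ (Function.update e x S)}

/-- `M ⊨ φ`: the root of `M` satisfies `φ`. -/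
def Sat (M : Model) (φ : Form) : Prop := M.root ∈ M.interp φ fun _ => ∅

/-- Points reachable from the root in exactly `k` steps (in a tree: points of depth `k`). -/
def stepsTo (M : Model) : ℕ → M.W → Prop
  | 0, w => w = M.root
  | (k+1), w => ∃ v, M.stepsTo k v ∧ M.R v w

/-- Membership in the `n`-prefix: depth at most `n`. -/
def InPrefix (M : Model) (n : ℕ) (w : M.W) : Prop := ∃ k ≤ n, M.stepsTo k w

/-- Tree models: every point is reachable from the root, the root has no predecessor,
and every point has at most one predecessor. -/
def IsTree (M : Model) : Prop :=
  (∀ w, Relation.ReflTransGen M.R M.root w) ∧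
  (∀ w, ¬ M.R w M.root) ∧
  (∀ w v v', M.R v w → M.R v' w → v = v')

/-- Outdegree at most `d`. -/
def outdegLE (M : Model) (d : ℕ) : Prop :=
  ∀ w, ¬ AtLeastCard (d+1) {v | M.R w v}

end Model

/-- The class `T^d` of all tree models of outdegree at most `d`. -/
def TreeC (d : ℕ) : Set Model := {M | M.IsTree ∧ M.outdegLE d}

/-- `(σ,n)`-bisimulations: bisimulations between the `n`-prefixes of the `σ`-reducts,
relating only points of equal depth and linking the roots. -/
structure IsNBisim (M M' : Model) (σ : Set ℕ) (n : ℕ) (Z : M.W → M'.W → Prop) : Prop where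
  root : Z M.root M'.root
  depthEq : ∀ ⦃w w'⦄, Z w w' → ∃ k ≤ n, M.stepsTo k w ∧ M'.stepsTo k w'
  base : ∀ ⦃w w'⦄, Z w w' → ∀ p ∈ σ, (M.val w p ↔ M'.val w' p)
  forth : ∀ ⦃w w'⦄, Z w w' → ∀ k, k < n → M.stepsTo k w →
      ∀ v, M.R w v → ∃ v', M'.R w' v' ∧ Z v v'
  back : ∀ ⦃w w'⦄, Z w w' → ∀ k, k < n → M'.stepsTo k w' →
      ∀ v', M'.R w' v' → ∃ v, M.R w v ∧ Z v v'

/-- `(σ,n)`-isomorphisms: `(σ,n)`-bisimulations bijective on the `n`-prefixes. -/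
def IsNIso (M M' : Model) (σ : Set ℕ) (n : ℕ) (Z : M.W → M'.W → Prop) : Prop :=
  IsNBisim M M' σ n Z ∧
  (∀ w w₁' w₂', Z w w₁' → Z w w₂' → w₁' = w₂') ∧
  (∀ w₁ w₂ w', Z w₁ w' → Z w₂ w' → w₁ = w₂) ∧
  (∀ w, M.InPrefix n w → ∃ w', Z w w') ∧
  (∀ w', M'.InPrefix n w' → ∃ w, Z w w')

/-- `M ≈ⁿ_σ M'`. -/
def NBisimEq (M M' : Model) (σ : Set ℕ) (n : ℕ) : Prop := ∃ Z, IsNBisim M M' σ n Z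

/-- `M ≅ⁿ_σ M'`. -/
def NIsoEq (M M' : Model) (σ : Set ℕ) (n : ℕ) : Prop := ∃ Z, IsNIso M M' σ n Z

/-- `ψ` separates `φ` from `φ'` over the class `C`: `φ ⊨ ψ` and `ψ ⊨ ¬φ'` over `C`. -/
def Separates (C : Set Model) (ψ φ φ' : Form) : Prop :=
  (∀ M ∈ C, M.Sat φ → M.Sat ψ) ∧ (∀ M ∈ C, M.Sat ψ → ¬ M.Sat φ')

/-!
Let `Z` be a `(σ,n)`-bisimulation between binary trees `M` and `M'`. A set of pairs both of whose
projections have at most two elements contains a subset with the same projections that is no larger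
than the larger of them. So among the `Z`-linked successor pairs of any pair of points one can keep
at most two without losing a successor on either side; this is where the bound two is essential.
Unfolding the pairs kept so far for `n` steps, and from then on following `M` in the first component
(or `M'` in the second), gives two binary trees with the same `n`-prefix. The projections onto `M`
and `M'` are bounded morphisms, so no formula changes its truth value.
-/

section FixedPointFusion

variable {α β : Type*} [CompleteLattice α] [CompleteLattice β] {l : α → β} {u : β → α}

theorem lfp_fusion (gc : GaloisConnection l u) (G : α →o α) (F : β →o β)
    (hGF : ∀ a, l (G a) = F (l a)) : l G.lfp = F.lfp := by
  apply le_antisymm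
  · refine (gc _ _).2 (G.lfp_le ((gc _ _).1 ?_))
    calc l (G (u F.lfp)) = F (l (u F.lfp)) := hGF _
      _ ≤ F F.lfp := F.monotone (gc.l_u_le _)
      _ = F.lfp := F.map_lfp
  · exact F.lfp_le (by rw [← hGF, G.map_lfp])

theorem gfp_fusion (gc : GaloisConnection l u) (G : α →o α) (F : β →o β)
    (hFG : ∀ b, u (F b) = G (u b)) : u F.gfp = G.gfp :=
  lfp_fusion gc.dual F.dual G.dual hFG

end FixedPointFusion

section Cardinality

theorem atLeastCard_iff_le_encard {W : Type} {g : ℕ} {S : Set W} :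
    AtLeastCard g S ↔ (g : ℕ∞) ≤ S.encard := by
  constructor
  · rintro ⟨f, hf, hS⟩
    calc (g : ℕ∞) = (Set.range f).encard := by
          rw [← Set.image_univ, hf.encard_image, Set.encard_univ, ENat.card_eq_coe_fintype_card,
            Fintype.card_fin]
      _ ≤ S.encard := Set.encard_le_encard (Set.range_subset_iff.2 hS)
  · intro h
    obtain ⟨T, hTS, hT⟩ := Set.exists_subset_encard_eq h
    have : Finite T := Set.finite_of_encard_eq_coe hT
    have hcard : Nat.card T = g := by rw [Nat.card_coe_set_eq, Set.ncard, hT, ENat.toNat_natCast]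
    let f := (Finite.equivFinOfCardEq hcard).symm
    exact ⟨fun i => f i, Subtype.val_injective.comp f.injective, fun i => hTS (f i).2⟩

theorem Model.outdegLE_iff_encard_le {M : Model} {d : ℕ} :
    M.outdegLE d ↔ ∀ w, {v | M.R w v}.encard ≤ d := by
  simp only [Model.outdegLE, atLeastCard_iff_le_encard, Nat.cast_add, Nat.cast_one, not_le,
    ENat.lt_natCast_add_one_iff]

variable {α β : Type*}

theorem encard_eq_two_of_nontrivial {S : Set α} (h : S.encard ≤ 2) (hS : S.Nontrivial) :
    S.encard = 2 :=
  h.antisymm <| by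
    simpa only [one_add_one_eq_two] using
      Order.add_one_le_of_lt (Set.one_lt_encard_iff_nontrivial.2 hS)

theorem exists_pair_subset_of_images_eq_pair {P : Set (α × β)} {a a' : α} {b b' : β}
    (hfst : Prod.fst '' P = {a, a'}) (hsnd : Prod.snd '' P = {b, b'}) :
    ∃ p q, {p, q} ⊆ P ∧ Prod.fst '' {p, q} = {a, a'} ∧ Prod.snd '' {p, q} = {b, b'} := by
  have hmatching : ((a, b) ∈ P ∧ (a', b') ∈ P) ∨ ((a, b') ∈ P ∧ (a', b) ∈ P) := by
    have exists_snd {x : α} (hx : x ∈ Prod.fst '' P) : (x, b) ∈ P ∨ (x, b') ∈ P := by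
      obtain ⟨⟨_, y⟩, hp, rfl⟩ := hx
      have hy : y ∈ ({b, b'} : Set β) := hsnd ▸ ⟨_, hp, rfl⟩
      rcases hy with rfl | rfl
      exacts [.inl hp, .inr hp]
    have exists_fst {y : β} (hy : y ∈ Prod.snd '' P) : (a, y) ∈ P ∨ (a', y) ∈ P := by
      obtain ⟨⟨x, _⟩, hp, rfl⟩ := hy
      have hx : x ∈ ({a, a'} : Set α) := hfst ▸ ⟨_, hp, rfl⟩
      rcases hx with rfl | rfl
      exacts [.inl hp, .inr hp]
    have ha := exists_snd (x := a) (by simp [hfst])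
    have ha' := exists_snd (x := a') (by simp [hfst])
    have hb := exists_fst (y := b) (by simp [hsnd])
    have hb' := exists_fst (y := b') (by simp [hsnd])
    tauto
  rcases hmatching with ⟨h, h'⟩ | ⟨h, h'⟩
  · exact ⟨(a, b), (a', b'), Set.pair_subset h h', by simp only [Set.image_pair],
      by simp only [Set.image_pair]⟩
  · exact ⟨(a, b'), (a', b), Set.pair_subset h h', by simp only [Set.image_pair],
      by simp only [Set.image_pair, Set.pair_comm b']⟩

theorem exists_subset_images_eq_encard_le {P : Set (α × β)}
    (hfst : (Prod.fst '' P).encard ≤ 2) (hsnd : (Prod.snd '' P).encard ≤ 2) :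
    ∃ Q ⊆ P, Prod.fst '' Q = Prod.fst '' P ∧ Prod.snd '' Q = Prod.snd '' P ∧
      Q.encard ≤ max (Prod.fst '' P).encard (Prod.snd '' P).encard := by
  by_cases hfst₁ : (Prod.fst '' P).Subsingleton
  · have hinj : Set.InjOn Prod.snd P := fun p hp q hq h =>
      Prod.ext (hfst₁ ⟨p, hp, rfl⟩ ⟨q, hq, rfl⟩) h
    exact ⟨P, subset_rfl, rfl, rfl, hinj.encard_image.ge.trans (le_max_right _ _)⟩
  by_cases hsnd₁ : (Prod.snd '' P).Subsingleton
  · have hinj : Set.InjOn Prod.fst P := fun p hp q hq h =>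
      Prod.ext h (hsnd₁ ⟨p, hp, rfl⟩ ⟨q, hq, rfl⟩)
    exact ⟨P, subset_rfl, rfl, rfl, hinj.encard_image.ge.trans (le_max_left _ _)⟩
  have hfst₂ : (Prod.fst '' P).encard = 2 :=
    encard_eq_two_of_nontrivial hfst (Set.not_subsingleton_iff.1 hfst₁)
  have hsnd₂ : (Prod.snd '' P).encard = 2 :=
    encard_eq_two_of_nontrivial hsnd (Set.not_subsingleton_iff.1 hsnd₁)
  obtain ⟨a, a', -, ha⟩ := Set.encard_eq_two.1 hfst₂
  obtain ⟨b, b', -, hb⟩ := Set.encard_eq_two.1 hsnd₂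
  obtain ⟨p, q, hpq, hp, hq⟩ := exists_pair_subset_of_images_eq_pair ha hb
  refine ⟨{p, q}, hpq, hp.trans ha.symm, hq.trans hb.symm, le_max_of_le_left ?_⟩
  calc ({p, q} : Set (α × β)).encard ≤ ({q} : Set (α × β)).encard + 1 := Set.encard_insert_le _ _
    _ = (Prod.fst '' P).encard := by rw [Set.encard_singleton, one_add_one_eq_two, hfst₂]

end Cardinality

namespace Model

section BoundedMorphism

theorem interp_mono (M : Model) (φ : Form) : Monotone (M.interp φ) := by
  induction φ with
  | pos p => exact fun _ _ _ => le_rfl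
  | neg p => exact fun _ _ _ => le_rfl
  | or φ ψ ihφ ihψ => exact fun _ _ h => Set.union_subset_union (ihφ h) (ihψ h)
  | and φ ψ ihφ ihψ => exact fun _ _ h => Set.inter_subset_inter (ihφ h) (ihψ h)
  | dia φ ih => exact fun _ _ h w ⟨v, hwv, hv⟩ => ⟨v, hwv, ih h hv⟩
  | box φ ih => exact fun _ _ h w hw v hwv => ih h (hw v hwv)
  | var x => exact fun _ _ h => h x
  | mu x φ ih =>
    exact fun _ _ h => sInf_le_sInf fun S hS =>
      (ih (update_le_update_iff.2 ⟨le_rfl, fun y _ => h y⟩)).trans hS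
  | nu x φ ih =>
    exact fun _ _ h => sSup_le_sSup fun S hS =>
      le_trans hS (ih (update_le_update_iff.2 ⟨le_rfl, fun y _ => h y⟩))

/-- The operator `S ↦ ⟦φ⟧(e[x ↦ S])`, whose least and greatest fixpoints interpret `μx.φ` and
`νx.φ`. -/
def interpHom (M : Model) (x : ℕ) (φ : Form) (e : ℕ → Set M.W) : Set M.W →o Set M.W where
  toFun S := M.interp φ (Function.update e x S)
  monotone' := (M.interp_mono φ).comp Function.update_mono

/-- Bounded morphisms (p-morphisms) of pointed models, that is, functional bisimulations. -/
structure IsBoundedMorphism (N M : Model) (f : N.W → M.W) : Prop where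
  root : f N.root = M.root
  val : ∀ q p, N.val q p ↔ M.val (f q) p
  image_succ : ∀ q, f '' {r | N.R q r} = {v | M.R (f q) v}

namespace IsBoundedMorphism

variable {N M : Model} {f : N.W → M.W}

theorem interp_preimage (hf : N.IsBoundedMorphism M f) (φ : Form) (e : ℕ → Set M.W) :
    N.interp φ (Set.preimage f ∘ e) = f ⁻¹' M.interp φ e := by
  have mem_image_succ (q : N.W) (v : M.W) : (∃ r, N.R q r ∧ f r = v) ↔ M.R (f q) v :=
    Set.ext_iff.1 (hf.image_succ q) v
  induction φ generalizing e with
  | pos p => ext q; exact hf.val q p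
  | neg p => ext q; exact not_congr (hf.val q p)
  | or φ ψ ihφ ihψ => simp only [interp, ihφ, ihψ, Set.preimage_union]
  | and φ ψ ihφ ihψ => simp only [interp, ihφ, ihψ, Set.preimage_inter]
  | dia φ ih =>
    ext q
    simp only [interp, ih, Set.mem_preimage, Set.mem_ofPred_eq, ← mem_image_succ]
    grind
  | box φ ih =>
    ext q
    simp only [interp, ih, Set.mem_preimage, Set.mem_ofPred_eq, ← mem_image_succ]
    grind
  | var x => rfl
  | mu x φ ih =>
    refine (lfp_fusion Set.preimage_kernImage (M.interpHom x φ e) (N.interpHom x φ _)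
      fun S => ?_).symm
    exact (ih _).symm.trans (congrArg _ (Function.comp_update _ _ _ _))
  | nu x φ ih =>
    refine (gfp_fusion Set.image_preimage (N.interpHom x φ _) (M.interpHom x φ e)
      fun S => ?_).symm
    exact (ih _).symm.trans (congrArg _ (Function.comp_update _ _ _ _))

theorem sat_iff (hf : N.IsBoundedMorphism M f) (φ : Form) : N.Sat φ ↔ M.Sat φ := by
  have hpreimage : N.interp φ (fun _ => ∅) = f ⁻¹' M.interp φ fun _ => ∅ :=
    hf.interp_preimage φ fun _ => ∅
  rw [Sat, Sat, hpreimage, Set.mem_preimage, hf.root]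

end IsBoundedMorphism

end BoundedMorphism

section Layered

variable {Y : Type}

/-- The states reached in exactly `k` steps from `y₀`, where `S k y` is the set of states that may
follow `y` in step `k`. -/
def layer (y₀ : Y) (S : ℕ → Y → Set Y) : ℕ → Set Y
  | 0 => {y₀}
  | k + 1 => ⋃ y ∈ layer y₀ S k, S k y

/-- The unfolding of a step-dependent transition system. Its points record the number of steps
taken, so that every point has a built-in depth. -/
def layered (V : Y → ℕ → Prop) (y₀ : Y) (S : ℕ → Y → Set Y) : Model where
  W := {q : ℕ × Y // q.2 ∈ layer y₀ S q.1}
  root := ⟨(0, y₀), rfl⟩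
  R q r := r.1.1 = q.1.1 + 1 ∧ r.1.2 ∈ S q.1.1 q.1.2
  val q := V q.1.2

variable {V V' : Y → ℕ → Prop} {y₀ : Y} {S S' : ℕ → Y → Set Y} {k n d : ℕ}

theorem mem_layer_succ {y z : Y} (hy : y ∈ layer y₀ S k) (hz : z ∈ S k y) :
    z ∈ layer y₀ S (k + 1) :=
  Set.mem_biUnion hy hz

theorem stepsTo_layered_iff {q : (layered V y₀ S).W} :
    (layered V y₀ S).stepsTo k q ↔ q.1.1 = k := by
  induction k generalizing q with
  | zero =>
    refine ⟨fun h => congrArg (fun q => q.1.1) h, fun h => ?_⟩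
    obtain ⟨⟨_, y⟩, hy⟩ := q
    obtain rfl := h
    obtain rfl : y = y₀ := hy
    rfl
  | succ k ih =>
    refine ⟨fun ⟨r, hr, hrq⟩ => by rw [hrq.1, ih.1 hr], fun h => ?_⟩
    obtain ⟨⟨_, z⟩, hz⟩ := q
    obtain rfl := h
    obtain ⟨y, hy, hyz⟩ := Set.mem_iUnion₂.1 hz
    exact ⟨⟨(k, y), hy⟩, ih.2 rfl, rfl, hyz⟩

theorem stepsTo.reflTransGen {M : Model} {w : M.W} (h : M.stepsTo k w) :
    Relation.ReflTransGen M.R M.root w := by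
  induction k generalizing w with
  | zero => exact h ▸ .refl
  | succ k ih =>
    obtain ⟨v, hv, hvw⟩ := h
    exact (ih hv).tail hvw

theorem isTree_layered (hS : ∀ k, Relator.LeftUnique fun y z => z ∈ S k y) :
    (layered V y₀ S).IsTree := by
  refine ⟨fun q => (stepsTo_layered_iff.2 rfl).reflTransGen, fun q hq => ?_, ?_⟩
  · exact absurd hq.1.symm (Nat.succ_ne_zero _)
  · rintro r ⟨⟨k, y⟩, hy⟩ ⟨⟨k', y'⟩, hy'⟩ ⟨hk, hyr⟩ ⟨hk', hyr'⟩
    obtain rfl : k = k' := Nat.succ_injective (hk.symm.trans hk')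
    obtain rfl : y = y' := hS k hyr hyr'
    rfl

theorem outdegLE_layered (hS : ∀ k y, (S k y).encard ≤ d) : (layered V y₀ S).outdegLE d := by
  refine outdegLE_iff_encard_le.2 fun q => ?_
  have hinj : Set.InjOn (fun r : (layered V y₀ S).W => r.1.2) {r | (layered V y₀ S).R q r} :=
    fun r hr r' hr' h => Subtype.ext (Prod.ext (hr.1.trans hr'.1.symm) h)
  calc {r | (layered V y₀ S).R q r}.encard
      = ((fun r => r.1.2) '' {r | (layered V y₀ S).R q r}).encard := hinj.encard_image.symm
    _ ≤ (S q.1.1 q.1.2).encard := Set.encard_le_encard (Set.image_subset_iff.2 fun r hr => hr.2)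
    _ ≤ d := hS _ _

theorem isBoundedMorphism_layered {M : Model} {π : Y → M.W} (hroot : π y₀ = M.root)
    (hS : ∀ k, ∀ y ∈ layer y₀ S k, π '' S k y = {v | M.R (π y) v}) :
    (layered (M.val ∘ π) y₀ S).IsBoundedMorphism M fun q => π q.1.2 where
  root := hroot
  val _ _ := Iff.rfl
  image_succ q := by
    rw [← hS q.1.1 q.1.2 q.2]
    ext v
    constructor
    · rintro ⟨r, hr, rfl⟩
      exact ⟨r.1.2, hr.2, rfl⟩
    · rintro ⟨y, hy, rfl⟩
      exact ⟨⟨(q.1.1 + 1, y), mem_layer_succ q.2 hy⟩, ⟨rfl, hy⟩, rfl⟩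

end Layered

end Model

namespace IsNBisim

variable {M M' : Model} {σ : Set ℕ} {k n : ℕ} {Z : M.W → M'.W → Prop}

theorem symm (hZ : IsNBisim M M' σ n Z) : IsNBisim M' M σ n (flip Z) where
  root := hZ.root
  depthEq _ _ h := (hZ.depthEq h).imp fun _ ⟨hk, hw, hw'⟩ => ⟨hk, hw', hw⟩
  base _ _ h p hp := (hZ.base h p hp).symm
  forth _ _ h := hZ.back h
  back _ _ h := hZ.forth h

theorem exists_of_inPrefix (hZ : IsNBisim M M' σ n Z) {w : M.W} (hw : M.InPrefix n w) :
    ∃ w', Z w w' := by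
  obtain ⟨k, hk, hw⟩ := hw
  induction k generalizing w with
  | zero => exact ⟨M'.root, by rw [show w = M.root from hw]; exact hZ.root⟩
  | succ k ih =>
    obtain ⟨v, hv, hvw⟩ := hw
    obtain ⟨v', hvv'⟩ := ih (Nat.le_of_succ_le hk) hv
    obtain ⟨w', -, hww'⟩ := hZ.forth hvv' k hk hv w hvw
    exact ⟨w', hww'⟩

theorem isNIso (hZ : IsNBisim M M' σ n Z) (hleft : Relator.LeftUnique Z)
    (hright : Relator.RightUnique Z) : IsNIso M M' σ n Z :=
  ⟨hZ, fun _ _ _ h₁ h₂ => hright h₁ h₂, fun _ _ _ h₁ h₂ => hleft h₁ h₂,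
    fun _ => hZ.exists_of_inPrefix, fun _ => hZ.symm.exists_of_inPrefix⟩

end IsNBisim

theorem nIsoEq_layered {Y : Type} {V V' : Y → ℕ → Prop} {y₀ : Y} {S S' : ℕ → Y → Set Y}
    {σ : Set ℕ} {n : ℕ} (hS : ∀ k < n, S k = S' k)
    (hV : ∀ k ≤ n, ∀ y ∈ Model.layer y₀ S k, ∀ p ∈ σ, (V y p ↔ V' y p)) :
    NIsoEq (.layered V y₀ S) (.layered V' y₀ S') σ n := by
  let Z (q : (Model.layered V y₀ S).W) (q' : (Model.layered V' y₀ S').W) : Prop :=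
    q.1 = q'.1 ∧ q.1.1 ≤ n
  have hZ : IsNBisim (.layered V y₀ S) (.layered V' y₀ S') σ n Z := by
    refine ⟨⟨rfl, n.zero_le⟩, ?_, ?_, ?_, ?_⟩
    · exact fun q q' ⟨hq, hn⟩ => ⟨q.1.1, hn, Model.stepsTo_layered_iff.2 rfl,
        Model.stepsTo_layered_iff.2 (by rw [hq])⟩
    · rintro ⟨q, hq⟩ ⟨_, _⟩ ⟨rfl, hn⟩
      exact hV q.1 hn q.2 hq
    · rintro ⟨q, hq⟩ ⟨_, hq'⟩ ⟨rfl, -⟩ k hk hqk r ⟨hr, hqr⟩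
      obtain rfl := Model.stepsTo_layered_iff.1 hqk
      have hqr' : r.1.2 ∈ S' q.1 q.2 := hS q.1 hk ▸ hqr
      exact ⟨⟨r.1, hr ▸ Model.mem_layer_succ hq' hqr'⟩, ⟨hr, hqr'⟩, rfl, hr.trans_le hk⟩
    · rintro ⟨q, hq⟩ ⟨_, hq'⟩ ⟨rfl, -⟩ k hk hqk r ⟨hr, hqr⟩
      obtain rfl := Model.stepsTo_layered_iff.1 hqk
      have hqr' : r.1.2 ∈ S q.1 q.2 := hS q.1 hk ▸ hqr
      exact ⟨⟨r.1, hr ▸ Model.mem_layer_succ hq hqr'⟩, ⟨hr, hqr'⟩, rfl, hr.trans_le hk⟩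
  exact ⟨Z, hZ.isNIso (fun _ _ _ h₁ h₂ => Subtype.ext (h₁.1.trans h₂.1.symm))
    fun _ _ _ h₁ h₂ => Subtype.ext (h₁.1.symm.trans h₂.1)⟩

section Pruning

variable {M M' : Model} {σ : Set ℕ} {k n d : ℕ} {Z : M.W → M'.W → Prop}
  {Q T : M.W × M'.W → Set (M.W × M'.W)}

/-- The pairs of successors of a pair of points that are linked by `Z`. -/
def linkedSucc (Z : M.W → M'.W → Prop) (q : M.W × M'.W) : Set (M.W × M'.W) :=
  {r | M.R q.1 r.1 ∧ M'.R q.2 r.2 ∧ Z r.1 r.2}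

theorem leftUnique_linkedSucc (hM : M.IsTree) (hM' : M'.IsTree) :
    Relator.LeftUnique fun q r => r ∈ linkedSucc Z q := fun _ _ _ h₁ h₂ =>
  Prod.ext (hM.2.2 _ _ _ h₁.1 h₂.1) (hM'.2.2 _ _ _ h₁.2.1 h₂.2.1)

theorem IsNBisim.image_fst_linkedSucc (hZ : IsNBisim M M' σ n Z) {q : M.W × M'.W}
    (hq : Z q.1 q.2) (hk : k < n) (hqk : M.stepsTo k q.1) :
    Prod.fst '' linkedSucc Z q = {v | M.R q.1 v} := by
  refine (Set.image_subset_iff.2 fun r hr => hr.1).antisymm fun v hv => ?_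
  obtain ⟨v', hv', hvv'⟩ := hZ.forth hq k hk hqk v hv
  exact ⟨(v, v'), ⟨hv, hv', hvv'⟩, rfl⟩

theorem IsNBisim.image_snd_linkedSucc (hZ : IsNBisim M M' σ n Z) {q : M.W × M'.W}
    (hq : Z q.1 q.2) (hk : k < n) (hqk : M'.stepsTo k q.2) :
    Prod.snd '' linkedSucc Z q = {v' | M'.R q.2 v'} := by
  refine (Set.image_subset_iff.2 fun r hr => hr.2.1).antisymm fun v' hv' => ?_
  obtain ⟨v, hv, hvv'⟩ := hZ.back hq k hk hqk v' hv'
  exact ⟨(v, v'), ⟨hv, hv', hvv'⟩, rfl⟩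

/-- A choice of at most `d` linked successor pairs at every pair of points that loses no
successor on either side. -/
structure IsPruning (d : ℕ) (Z : M.W → M'.W → Prop) (Q : M.W × M'.W → Set (M.W × M'.W)) :
    Prop where
  subset : ∀ q, Q q ⊆ linkedSucc Z q
  image_fst : ∀ q, Prod.fst '' Q q = Prod.fst '' linkedSucc Z q
  image_snd : ∀ q, Prod.snd '' Q q = Prod.snd '' linkedSucc Z q
  encard_le : ∀ q, (Q q).encard ≤ d

theorem exists_isPruning (hd : d ≤ 2) (hM : M.outdegLE d) (hM' : M'.outdegLE d)
    (Z : M.W → M'.W → Prop) : ∃ Q, IsPruning d Z Q := by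
  have hfst (q : M.W × M'.W) : (Prod.fst '' linkedSucc Z q).encard ≤ d :=
    (Set.encard_le_encard (Set.image_subset_iff.2 fun r hr => hr.1)).trans
      (Model.outdegLE_iff_encard_le.1 hM q.1)
  have hsnd (q : M.W × M'.W) : (Prod.snd '' linkedSucc Z q).encard ≤ d :=
    (Set.encard_le_encard (Set.image_subset_iff.2 fun r hr => hr.2.1)).trans
      (Model.outdegLE_iff_encard_le.1 hM' q.2)
  have hd' : (d : ℕ∞) ≤ 2 := mod_cast hd
  choose Q hQ using fun q => exists_subset_images_eq_encard_le
    ((hfst q).trans hd') ((hsnd q).trans hd')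
  exact ⟨Q, fun q => (hQ q).1, fun q => (hQ q).2.1, fun q => (hQ q).2.2.1,
    fun q => (hQ q).2.2.2.trans (max_le (hfst q) (hsnd q))⟩

/-- The step-dependent transition system that follows `Q` for `n` steps and `T` afterwards. -/
def switchAt {Y : Type} (n : ℕ) (Q T : Y → Set Y) (k : ℕ) : Y → Set Y :=
  if k < n then Q else T

namespace IsPruning

theorem linked_of_mem_layer (hQ : IsPruning d Z Q) (hZ : Z M.root M'.root) (hk : k ≤ n)
    {q : M.W × M'.W} (hq : q ∈ Model.layer (M.root, M'.root) (switchAt n Q T) k) :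
    Z q.1 q.2 ∧ M.stepsTo k q.1 ∧ M'.stepsTo k q.2 := by
  induction k generalizing q with
  | zero =>
    obtain rfl : q = (M.root, M'.root) := hq
    exact ⟨hZ, rfl, rfl⟩
  | succ k ih =>
    obtain ⟨r, hr, hrq⟩ := Set.mem_iUnion₂.1 hq
    rw [switchAt, if_pos (Nat.lt_of_succ_le hk)] at hrq
    obtain ⟨-, hr₁, hr₂⟩ := ih (Nat.le_of_succ_le hk) hr
    obtain ⟨hR, hR', hlinked⟩ := hQ.subset r hrq
    exact ⟨hlinked, ⟨r.1, hr₁, hR⟩, r.2, hr₂, hR'⟩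

theorem isBoundedMorphism_fst (hQ : IsPruning d Z Q) (hZ : IsNBisim M M' σ n Z)
    (hT : ∀ q, Prod.fst '' T q = {v | M.R q.1 v}) :
    (Model.layered (M.val ∘ Prod.fst) (M.root, M'.root) (switchAt n Q T)).IsBoundedMorphism M
      fun q => q.1.2.1 := by
  refine Model.isBoundedMorphism_layered rfl fun k q hq => ?_
  by_cases hk : k < n
  · obtain ⟨hlinked, hqk, -⟩ := hQ.linked_of_mem_layer hZ.root hk.le hq
    rw [switchAt, if_pos hk, hQ.image_fst, hZ.image_fst_linkedSucc hlinked hk hqk]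
  · rw [switchAt, if_neg hk, hT]

theorem isBoundedMorphism_snd (hQ : IsPruning d Z Q) (hZ : IsNBisim M M' σ n Z)
    (hT : ∀ q, Prod.snd '' T q = {v' | M'.R q.2 v'}) :
    (Model.layered (M'.val ∘ Prod.snd) (M.root, M'.root) (switchAt n Q T)).IsBoundedMorphism M'
      fun q => q.1.2.2 := by
  refine Model.isBoundedMorphism_layered rfl fun k q hq => ?_
  by_cases hk : k < n
  · obtain ⟨hlinked, -, hqk⟩ := hQ.linked_of_mem_layer hZ.root hk.le hq
    rw [switchAt, if_pos hk, hQ.image_snd, hZ.image_snd_linkedSucc hlinked hk hqk]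
  · rw [switchAt, if_neg hk, hT]

theorem layered_mem_treeC (hQ : IsPruning d Z Q) (hM : M.IsTree) (hM' : M'.IsTree)
    (hT : Relator.LeftUnique fun q r => r ∈ T q) (hTd : ∀ q, (T q).encard ≤ d)
    (V : M.W × M'.W → ℕ → Prop) (q₀ : M.W × M'.W) :
    Model.layered V q₀ (switchAt n Q T) ∈ TreeC d := by
  refine ⟨Model.isTree_layered fun k => ?_, Model.outdegLE_layered fun k q => ?_⟩ <;>
    rw [switchAt] <;> split_ifs
  · exact fun _ _ _ h₁ h₂ => leftUnique_linkedSucc hM hM' (hQ.subset _ h₁) (hQ.subset _ h₂)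
  · exact hT
  · exact hQ.encard_le q
  · exact hTd q

theorem nIsoEq (hQ : IsPruning d Z Q) (hZ : IsNBisim M M' σ n Z)
    (T T' : M.W × M'.W → Set (M.W × M'.W)) :
    NIsoEq (.layered (M.val ∘ Prod.fst) (M.root, M'.root) (switchAt n Q T))
      (.layered (M'.val ∘ Prod.snd) (M.root, M'.root) (switchAt n Q T')) σ n :=
  nIsoEq_layered (fun _ hk => by rw [switchAt, switchAt, if_pos hk, if_pos hk])
    fun _ hk _ hq => hZ.base (hQ.linked_of_mem_layer hZ.root hk hq).1

end IsPruning

theorem exists_nIsoEq_of_nBisimEq (hd : d ≤ 2) (hM : M ∈ TreeC d) (hM' : M' ∈ TreeC d)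
    (h : NBisimEq M M' σ n) :
    ∃ N ∈ TreeC d, ∃ N' ∈ TreeC d, (∃ f, N.IsBoundedMorphism M f) ∧
      (∃ f', N'.IsBoundedMorphism M' f') ∧ NIsoEq N N' σ n := by
  obtain ⟨Z, hZ⟩ := h
  obtain ⟨Q, hQ⟩ := exists_isPruning hd hM.2 hM'.2 Z
  let T (q : M.W × M'.W) : Set (M.W × M'.W) := {v | M.R q.1 v} ×ˢ {q.2}
  let T' (q : M.W × M'.W) : Set (M.W × M'.W) := {q.1} ×ˢ {v' | M'.R q.2 v'}
  have hT : Relator.LeftUnique fun q r => r ∈ T q := fun _ _ _ h₁ h₂ =>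
    Prod.ext (hM.1.2.2 _ _ _ h₁.1 h₂.1) (h₁.2.symm.trans h₂.2)
  have hT' : Relator.LeftUnique fun q r => r ∈ T' q := fun _ _ _ h₁ h₂ =>
    Prod.ext (h₁.1.symm.trans h₂.1) (hM'.1.2.2 _ _ _ h₁.2 h₂.2)
  have hTd (q) : (T q).encard ≤ d := by
    simpa [T, Set.encard_prod] using Model.outdegLE_iff_encard_le.1 hM.2 q.1
  have hTd' (q) : (T' q).encard ≤ d := by
    simpa [T', Set.encard_prod] using Model.outdegLE_iff_encard_le.1 hM'.2 q.2
  exact ⟨_, hQ.layered_mem_treeC hM.1 hM'.1 hT hTd _ _,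
    _, hQ.layered_mem_treeC hM.1 hM'.1 hT' hTd' _ _,
    ⟨_, hQ.isBoundedMorphism_fst hZ fun q => Set.fst_image_prod _ (Set.singleton_nonempty _)⟩,
    ⟨_, hQ.isBoundedMorphism_snd hZ fun q => Set.snd_image_prod (Set.singleton_nonempty _) _⟩,
    hQ.nIsoEq hZ T T'⟩

end Pruning

theorem stmt_9_general {d : ℕ} (hd : d ≤ 2) (φ φ' : Form) (σ : Set ℕ) (n : ℕ) :
    (∃ M ∈ TreeC d, ∃ M' ∈ TreeC d, M.Sat φ ∧ M'.Sat φ' ∧ NBisimEq M M' σ n) ↔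
    (∃ M ∈ TreeC d, ∃ M' ∈ TreeC d, M.Sat φ ∧ M'.Sat φ' ∧ NIsoEq M M' σ n) := by
  constructor
  · rintro ⟨M, hM, M', hM', hφ, hφ', h⟩
    obtain ⟨N, hN, N', hN', ⟨f, hf⟩, ⟨f', hf'⟩, hiso⟩ := exists_nIsoEq_of_nBisimEq hd hM hM' h
    exact ⟨N, hN, N', hN', (hf.sat_iff φ).2 hφ, (hf'.sat_iff φ').2 hφ', hiso⟩
  · rintro ⟨M, hM, M', hM', hφ, hφ', Z, hZ⟩
    exact ⟨M, hM, M', hM', hφ, hφ', Z, hZ.1⟩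

/-- over `T^2`, joint `≈ⁿ_σ`-consistency and joint `≅ⁿ_σ`-consistency coincide. -/
theorem stmt_9 (φ φ' : Form) (σ : Set ℕ) (hσ : σ.Finite)
    (h1 : φ.sig ⊆ σ) (h2 : φ'.sig ⊆ σ) (n : ℕ) :
    (∃ M ∈ TreeC 2, ∃ M' ∈ TreeC 2, M.Sat φ ∧ M'.Sat φ' ∧ NBisimEq M M' σ n) ↔
    (∃ M ∈ TreeC 2, ∃ M' ∈ TreeC 2, M.Sat φ ∧ M'.Sat φ' ∧ NIsoEq M M' σ n) :=
  stmt_9_general le_rfl φ φ' σ n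
end

section
/- For every d ≥ 3, modal logic ML does not enjoy the Craig interpolation property over T^d. In particular, for d = 3, letting φ = ◇(a∧b) ∧ ◇(a∧¬b) and φ' = ◇(¬a∧c) ∧ ◇(¬a∧¬c), we have φ ⊨ ¬φ' over T^3, yet there is no ML-formula ψ with sig(ψ) ⊆ {a} such that φ ⊨ ψ and ψ ⊨ ¬φ' over T^3. -/
/-- ML enjoys the Craig interpolation property over a class `C`. -/
def MLCIP (C : Set Model) : Prop :=
  ∀ φ φ' : Form, φ.IsML → φ'.IsML → (∀ M ∈ C, M.Sat φ → M.Sat φ') →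
    ∃ ψ : Form, ψ.IsML ∧ ψ.sig ⊆ φ.sig ∩ φ'.sig ∧
      (∀ M ∈ C, M.Sat φ → M.Sat ψ) ∧ (∀ M ∈ C, M.Sat ψ → M.Sat φ')

/-- `φ = ◇(a∧b) ∧ ◇(a∧¬b)` with `a = 0`, `b = 1`. -/
def phiCE : Form := .and (.dia (.and (.pos 0) (.pos 1))) (.dia (.and (.pos 0) (.neg 1)))

/-- `φ' = ◇(¬a∧c) ∧ ◇(¬a∧¬c)` with `a = 0`, `c = 2`. -/
def phiCE' : Form := .and (.dia (.and (.neg 0) (.pos 2))) (.dia (.and (.neg 0) (.neg 2)))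

theorem two_le_encard_of_ne {W : Type*} {S : Set W} {u v : W} (hu : u ∈ S) (hv : v ∈ S)
    (huv : u ≠ v) : (2 : ℕ) ≤ S.encard :=
  calc ((2 : ℕ) : ℕ∞) = ({u, v} : Set W).encard := (Set.encard_pair huv).symm
    _ ≤ S.encard := Set.encard_le_encard (Set.pair_subset hu hv)

namespace Model

section Outdegree

variable {M : Model} {d : ℕ}

theorem outdegLE_iff_encard_le_s10 : M.outdegLE d ↔ ∀ w, {v | M.R w v}.encard ≤ d := by
  simp only [outdegLE, atLeastCard_iff_le_encard, not_le, Nat.cast_add, Nat.cast_one,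
    ENat.lt_add_one_iff (ENat.natCast_ne_top d)]

theorem outdegLE.add_le {m n : ℕ} (hM : M.outdegLE d) {w : M.W} {P : M.W → Prop}
    (hm : m ≤ {v | M.R w v ∧ P v}.encard) (hn : n ≤ {v | M.R w v ∧ ¬ P v}.encard) :
    m + n ≤ d := by
  have hcard : ((m + n : ℕ) : ℕ∞) ≤ d := calc
    ((m + n : ℕ) : ℕ∞) ≤ {v | M.R w v ∧ P v}.encard + {v | M.R w v ∧ ¬ P v}.encard := by
      push_cast; gcongr
    _ = {v | M.R w v}.encard := by
      rw [add_comm]; exact Set.encard_sdiff_add_encard_inter {v | M.R w v} {v | P v}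
    _ ≤ d := outdegLE_iff_encard_le_s10.1 hM w
  exact_mod_cast hcard

end Outdegree

end Model

section Bisimulation

variable {M M' : Model} {σ : Set ℕ} {n : ℕ}

theorem IsNBisim.mem_interp_iff {Z : M.W → M'.W → Prop} (hZ : IsNBisim M M' σ n Z)
    (e : ℕ → Set M.W) (e' : ℕ → Set M'.W) {ψ : Form} (hML : ψ.IsML) (hσ : ψ.sig ⊆ σ) {k : ℕ}
    (hk : k + ψ.depth ≤ n) {w : M.W} {w' : M'.W} (hw : M.stepsTo k w) (hw' : M'.stepsTo k w')
    (hww' : Z w w') : w ∈ M.interp ψ e ↔ w' ∈ M'.interp ψ e' := by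
  induction ψ generalizing k w w' with
  | pos p => exact hZ.base hww' p (hσ rfl)
  | neg p => exact not_congr (hZ.base hww' p (hσ rfl))
  | or φ ψ ihφ ihψ =>
    obtain ⟨hφσ, hψσ⟩ := Set.union_subset_iff.1 hσ
    simp only [Form.depth] at hk
    exact or_congr (ihφ hML.1 hφσ (by omega) hw hw' hww') (ihψ hML.2 hψσ (by omega) hw hw' hww')
  | and φ ψ ihφ ihψ =>
    obtain ⟨hφσ, hψσ⟩ := Set.union_subset_iff.1 hσ
    simp only [Form.depth] at hk
    exact and_congr (ihφ hML.1 hφσ (by omega) hw hw' hww') (ihψ hML.2 hψσ (by omega) hw hw' hww')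
  | dia φ ih =>
    simp only [Form.depth] at hk
    have ih {v v'} (hv : M.R w v) (hv' : M'.R w' v') := ih hML hσ (k := k + 1) (by omega)
      (w := v) (w' := v') ⟨w, hw, hv⟩ ⟨w', hw', hv'⟩
    constructor
    · rintro ⟨v, hv, hvφ⟩
      obtain ⟨v', hv', hvv'⟩ := hZ.forth hww' k (by omega) hw v hv
      exact ⟨v', hv', (ih hv hv' hvv').1 hvφ⟩
    · rintro ⟨v', hv', hvφ⟩
      obtain ⟨v, hv, hvv'⟩ := hZ.back hww' k (by omega) hw' v' hv'
      exact ⟨v, hv, (ih hv hv' hvv').2 hvφ⟩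
  | box φ ih =>
    simp only [Form.depth] at hk
    have ih {v v'} (hv : M.R w v) (hv' : M'.R w' v') := ih hML hσ (k := k + 1) (by omega)
      (w := v) (w' := v') ⟨w, hw, hv⟩ ⟨w', hw', hv'⟩
    constructor
    · intro h v' hv'
      obtain ⟨v, hv, hvv'⟩ := hZ.back hww' k (by omega) hw' v' hv'
      exact (ih hv hv' hvv').1 (h v hv)
    · intro h v hv
      obtain ⟨v', hv', hvv'⟩ := hZ.forth hww' k (by omega) hw v hv
      exact (ih hv hv' hvv').2 (h v' hv')
  | var x => exact hML.elim
  | mu x φ _ => exact hML.elim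
  | nu x φ _ => exact hML.elim

theorem NBisimEq.sat_iff (h : NBisimEq M M' σ n) {ψ : Form} (hML : ψ.IsML) (hσ : ψ.sig ⊆ σ)
    (hn : ψ.depth ≤ n) : M.Sat ψ ↔ M'.Sat ψ := by
  obtain ⟨Z, hZ⟩ := h
  exact hZ.mem_interp_iff _ _ hML hσ (k := 0) (by omega) rfl rfl hZ.root

end Bisimulation

namespace Model

/-- The tree of height one whose root satisfies no proposition and which has exactly one leaf
for each label in `L`; the leaf `some ℓ` satisfies the propositions in `ℓ`. -/
def star (L : Set (Set ℕ)) : Model where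
  W := Option L
  root := none
  R w v := w = none ∧ ∃ ℓ, v = some ℓ
  val w p := ∃ ℓ ∈ w, p ∈ ℓ.1

section Star

variable {L L' : Set (Set ℕ)}

@[simp]
theorem star_val_some {ℓ : L} {p : ℕ} : (star L).val (some ℓ) p ↔ p ∈ ℓ.1 := by
  simp [star]

theorem exists_star_R_root {P : (star L).W → Prop} :
    (∃ v, (star L).R (star L).root v ∧ P v) ↔ ∃ ℓ, ∃ h : ℓ ∈ L, P (some ⟨ℓ, h⟩) := by
  simp [star]

theorem star_mem_treeC {d : ℕ} (hL : L.encard ≤ d) : star L ∈ TreeC d := by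
  refine ⟨⟨?_, ?_, ?_⟩, outdegLE_iff_encard_le_s10.2 fun w => ?_⟩
  · rintro (_ | ℓ)
    · exact .refl
    · exact .single ⟨rfl, ℓ, rfl⟩
  · rintro w ⟨-, ℓ, hℓ⟩
    cases hℓ
  · rintro w v v' ⟨rfl, -⟩ ⟨rfl, -⟩
    rfl
  · have hsub : {v | (star L).R w v} ⊆ (some : L → Option L) '' Set.univ := by
      rintro v ⟨-, ℓ, rfl⟩
      exact ⟨ℓ, trivial, rfl⟩
    calc {v | (star L).R w v}.encard ≤ ((some : L → Option L) '' Set.univ).encard :=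
          Set.encard_le_encard hsub
      _ ≤ (Set.univ : Set L).encard := Set.encard_image_le _ _
      _ = L.encard := Set.encard_univ L
      _ ≤ d := hL

theorem star_nBisimEq {σ : Set ℕ} (h : (· ∩ σ) '' L = (· ∩ σ) '' L') (n : ℕ) :
    NBisimEq (star L) (star L') σ (n + 1) := by
  refine ⟨Option.Rel fun ℓ ℓ' => ℓ.1 ∩ σ = ℓ'.1 ∩ σ, .none, ?_, ?_, ?_, ?_⟩
  · rintro _ _ (@⟨ℓ, ℓ', -⟩ | -)
    · exact ⟨1, by omega, ⟨none, rfl, rfl, ℓ, rfl⟩, ⟨none, rfl, rfl, ℓ', rfl⟩⟩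
    · exact ⟨0, by omega, rfl, rfl⟩
  · rintro _ _ (@⟨ℓ, ℓ', hℓ⟩ | -) p hp
    · simpa [hp] using Set.ext_iff.1 hℓ p
    · simp [star]
  · rintro _ _ hww' - - - _ ⟨rfl, ℓ, rfl⟩
    obtain - | - := hww'
    obtain ⟨ℓ', hℓ', hℓℓ'⟩ := h.subset ⟨ℓ, ℓ.2, rfl⟩
    exact ⟨some ⟨ℓ', hℓ'⟩, ⟨rfl, _, rfl⟩, .some hℓℓ'.symm⟩
  · rintro _ _ hww' - - - _ ⟨rfl, ℓ', rfl⟩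
    obtain - | - := hww'
    obtain ⟨ℓ, hℓ, hℓℓ'⟩ := h.superset ⟨ℓ', ℓ'.2, rfl⟩
    exact ⟨some ⟨ℓ, hℓ⟩, ⟨rfl, _, rfl⟩, .some hℓℓ'⟩

theorem star_sat_iff {σ : Set ℕ} (h : (· ∩ σ) '' L = (· ∩ σ) '' L') {ψ : Form} (hML : ψ.IsML)
    (hσ : ψ.sig ⊆ σ) : (star L).Sat ψ ↔ (star L').Sat ψ :=
  (star_nBisimEq h ψ.depth).sat_iff hML hσ ψ.depth.le_succ

end Star

end Model

namespace Form

/-- The conjunction of `f 0, …, f n`. -/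
def bigAnd (f : ℕ → Form) : ℕ → Form
  | 0 => f 0
  | n + 1 => and (bigAnd f n) (f (n + 1))

theorem isML_bigAnd {f : ℕ → Form} (hf : ∀ i, (f i).IsML) (n : ℕ) : (bigAnd f n).IsML := by
  induction n with
  | zero => exact hf 0
  | succ n ih => exact ⟨ih, hf _⟩

theorem mem_sig_bigAnd {f : ℕ → Form} {n p : ℕ} :
    p ∈ (bigAnd f n).sig ↔ ∃ i ≤ n, p ∈ (f i).sig := by
  induction n with
  | zero => simp [bigAnd]
  | succ n ih => simp [bigAnd, sig, ih, Nat.le_succ_iff, or_and_right, exists_or]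

theorem mem_interp_bigAnd {M : Model} {f : ℕ → Form} {n : ℕ} {e : ℕ → Set M.W} {w : M.W} :
    w ∈ M.interp (bigAnd f n) e ↔ ∀ i ≤ n, w ∈ M.interp (f i) e := by
  induction n with
  | zero => simp [bigAnd]
  | succ n ih => simp [bigAnd, Model.interp, ih, Nat.le_succ_iff, or_imp, forall_and]

/-- Among the propositions `2, …, n + 2`, exactly `i + 2` holds. -/
def onlyProp (n i : ℕ) : Form :=
  bigAnd (fun j => if j = i then pos (j + 2) else neg (j + 2)) n

/-- The analogue of `phiCE'` for `n + 1` successors violating `a`: these are told apart by the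
propositions `2, …, n + 2`. -/
def manyNotA (n : ℕ) : Form := bigAnd (fun i => dia (and (neg 0) (onlyProp n i))) n

/-- The negation `□(¬a ∨ ¬b) ∨ □(¬a ∨ b)` of `phiCE`. -/
def notPhiCE : Form := or (box (or (neg 0) (neg 1))) (box (or (neg 0) (pos 1)))

theorem isML_onlyProp (n i : ℕ) : (onlyProp n i).IsML :=
  isML_bigAnd (fun j => by split <;> trivial) n

theorem isML_manyNotA (n : ℕ) : (manyNotA n).IsML := by
  refine isML_bigAnd (fun i => ?_) n
  exact ⟨trivial, isML_onlyProp n i⟩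

theorem one_notMem_sig_manyNotA (n : ℕ) : 1 ∉ (manyNotA n).sig := by
  simp only [manyNotA, onlyProp, mem_sig_bigAnd, sig, Set.mem_union]
  rintro ⟨i, -, h | ⟨j, -, h⟩⟩
  · simp at h
  · split at h <;> simp [sig] at h

theorem sig_manyNotA_inter_sig_notPhiCE_subset (n : ℕ) :
    (manyNotA n).sig ∩ notPhiCE.sig ⊆ {0} := by
  rintro p ⟨hp, hp'⟩
  have hp1 : p ≠ 1 := fun h => one_notMem_sig_manyNotA n (h ▸ hp)
  simpa [notPhiCE, sig, hp1] using hp'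

end Form

namespace Model

section Counting

variable {M : Model}

theorem sat_phiCE_iff : M.Sat phiCE ↔
    (∃ v, M.R M.root v ∧ M.val v 0 ∧ M.val v 1) ∧
      ∃ v, M.R M.root v ∧ M.val v 0 ∧ ¬ M.val v 1 :=
  Iff.rfl

theorem sat_phiCE'_iff : M.Sat phiCE' ↔
    (∃ v, M.R M.root v ∧ ¬ M.val v 0 ∧ M.val v 2) ∧
      ∃ v, M.R M.root v ∧ ¬ M.val v 0 ∧ ¬ M.val v 2 :=
  Iff.rfl

theorem sat_notPhiCE_iff : M.Sat .notPhiCE ↔ ¬ M.Sat phiCE := by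
  simp [Sat, Form.notPhiCE, phiCE, interp, imp_iff_not_or, -not_and, not_and_or]

theorem mem_interp_onlyProp {e : ℕ → Set M.W} {w : M.W} {n i : ℕ} :
    w ∈ M.interp (.onlyProp n i) e ↔ ∀ j ≤ n, M.val w (j + 2) ↔ j = i := by
  rw [Form.onlyProp, Form.mem_interp_bigAnd]
  refine forall₂_congr fun j _ => ?_
  split <;> simp [interp, *]

theorem sat_manyNotA_iff {n : ℕ} : M.Sat (.manyNotA n) ↔ ∀ i ≤ n, ∃ v, M.R M.root v ∧
    ¬ M.val v 0 ∧ ∀ j ≤ n, M.val v (j + 2) ↔ j = i := by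
  simp only [Sat, Form.manyNotA, Form.mem_interp_bigAnd, interp, Set.mem_ofPred_eq,
    Set.mem_inter_iff, mem_interp_onlyProp]

theorem two_le_encard_of_sat_phiCE (h : M.Sat phiCE) :
    (2 : ℕ) ≤ {v | M.R M.root v ∧ M.val v 0}.encard := by
  obtain ⟨⟨u, hu, hua, hub⟩, v, hv, hva, hvb⟩ := sat_phiCE_iff.1 h
  have huv : u ≠ v := fun heq => hvb (heq ▸ hub)
  exact two_le_encard_of_ne ⟨hu, hua⟩ ⟨hv, hva⟩ huv

theorem two_le_encard_of_sat_phiCE' (h : M.Sat phiCE') :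
    (2 : ℕ) ≤ {v | M.R M.root v ∧ ¬ M.val v 0}.encard := by
  obtain ⟨⟨u, hu, hua, huc⟩, v, hv, hva, hvc⟩ := sat_phiCE'_iff.1 h
  have huv : u ≠ v := fun heq => hvc (heq ▸ huc)
  exact two_le_encard_of_ne ⟨hu, hua⟩ ⟨hv, hva⟩ huv

theorem succ_le_encard_of_sat_manyNotA {n : ℕ} (h : M.Sat (.manyNotA n)) :
    (n + 1 : ℕ) ≤ {v | M.R M.root v ∧ ¬ M.val v 0}.encard := by
  choose v hR ha hv using fun i : Fin (n + 1) => sat_manyNotA_iff.1 h i i.is_le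
  refine atLeastCard_iff_le_encard.1 ⟨v, fun i j hij => Fin.ext ?_, fun i => ⟨hR i, ha i⟩⟩
  exact (hv j i i.is_le).1 (hij ▸ (hv i i i.is_le).2 rfl)

theorem not_sat_phiCE'_of_sat_phiCE (hM : M.outdegLE 3) (h : M.Sat phiCE) : ¬ M.Sat phiCE' := by
  intro h'
  have : 2 + 2 ≤ 3 := hM.add_le (two_le_encard_of_sat_phiCE h) (two_le_encard_of_sat_phiCE' h')
  omega

theorem not_sat_phiCE_of_sat_manyNotA {n : ℕ} (hM : M.outdegLE (n + 2)) (h : M.Sat (.manyNotA n)) :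
    ¬ M.Sat phiCE := by
  intro h'
  have : 2 + (n + 1) ≤ n + 2 :=
    hM.add_le (two_le_encard_of_sat_phiCE h') (succ_le_encard_of_sat_manyNotA h)
  omega

end Counting

/-- The leaf labels `{a, b}`, `{a}`, `∅` of the star that satisfies `phiCE`; the third is there to
match the leaves violating `a` of the other star. -/
def phiLabels : Set (Set ℕ) := {{0, 1}, {0}, ∅}

/-- The leaf labels `{a}`, `{2}, …, {n + 2}` of the star that satisfies `manyNotA n`; with `2` for
`c`, that of `n = 1` satisfies `phiCE'` as well. -/
def manyNotALabels (n : ℕ) : Set (Set ℕ) := insert {0} ((fun i => {i + 2}) '' Set.Iic n)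

theorem star_phiLabels_mem_treeC {d : ℕ} (hd : 3 ≤ d) : star phiLabels ∈ TreeC d := by
  refine star_mem_treeC ?_
  calc phiLabels.encard ≤ ({{0}, ∅} : Set (Set ℕ)).encard + 1 := Set.encard_insert_le _ _
    _ ≤ ({∅} : Set (Set ℕ)).encard + 1 + 1 := by gcongr; exact Set.encard_insert_le _ _
    _ = 3 := by rw [Set.encard_singleton]; norm_num
    _ ≤ d := by exact_mod_cast hd

theorem star_manyNotALabels_mem_treeC (n : ℕ) : star (manyNotALabels n) ∈ TreeC (n + 2) := by
  refine star_mem_treeC ?_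
  calc (manyNotALabels n).encard ≤ (Set.Iic n).encard + 1 :=
        (Set.encard_insert_le _ _).trans (by gcongr; exact Set.encard_image_le _ _)
    _ = (n + 2 : ℕ) := by simp [Set.encard_eq_coe_toFinset_card, add_assoc, one_add_one_eq_two]

theorem star_phiLabels_sat_iff (n : ℕ) {ψ : Form} (hML : ψ.IsML) (hσ : ψ.sig ⊆ {0}) :
    (star phiLabels).Sat ψ ↔ (star (manyNotALabels n)).Sat ψ := by
  refine star_sat_iff ?_ hML hσ
  have h₁ : (· ∩ {0}) '' phiLabels = {{0}, ∅} := by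
    simp [phiLabels, Set.image_insert_eq]
  have h₂ : (· ∩ {0}) '' manyNotALabels n = {{0}, ∅} := by
    simp [manyNotALabels, Set.image_insert_eq, Set.image_image]
  rw [h₁, h₂]

theorem star_phiLabels_sat_phiCE : (star phiLabels).Sat phiCE := by
  simp only [sat_phiCE_iff, exists_star_R_root, star_val_some]
  exact ⟨⟨{0, 1}, .inl rfl, by simp, by simp⟩, {0}, .inr (.inl rfl), by simp, by simp⟩

theorem star_manyNotALabels_sat_manyNotA (n : ℕ) :
    (star (manyNotALabels n)).Sat (.manyNotA n) := by
  simp only [sat_manyNotA_iff, exists_star_R_root, star_val_some]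
  exact fun i hi => ⟨{i + 2}, .inr ⟨i, hi, rfl⟩, by simp, by simp⟩

theorem star_manyNotALabels_one_sat_phiCE' : (star (manyNotALabels 1)).Sat phiCE' := by
  simp only [sat_phiCE'_iff, exists_star_R_root, star_val_some]
  exact ⟨⟨{2}, .inr ⟨0, by simp, rfl⟩, by simp, by simp⟩,
    {3}, .inr ⟨1, by simp, rfl⟩, by simp, by simp⟩

end Model

/-- for `d ≥ 3`, ML lacks the Craig interpolation property over `T^d`;
in particular over `T^3`, `φ ⊨ ¬φ'` but no ML-formula over `{a}` separates `φ` from `φ'`. -/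
theorem stmt_10 :
    (∀ d, 3 ≤ d → ¬ MLCIP (TreeC d)) ∧
    (∀ M ∈ TreeC 3, M.Sat phiCE → ¬ M.Sat phiCE') ∧
    (¬ ∃ ψ : Form, ψ.IsML ∧ ψ.sig ⊆ {0} ∧
      (∀ M ∈ TreeC 3, M.Sat phiCE → M.Sat ψ) ∧
      (∀ M ∈ TreeC 3, M.Sat ψ → ¬ M.Sat phiCE')) := by
  refine ⟨fun d hd hCIP => ?_, fun M hM => M.not_sat_phiCE'_of_sat_phiCE hM.2, ?_⟩
  · obtain ⟨n, rfl⟩ : ∃ n, d = n + 2 := ⟨d - 2, by omega⟩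
    obtain ⟨ψ, hML, hsig, hmany, hphi⟩ := hCIP (.manyNotA n) .notPhiCE (Form.isML_manyNotA n)
      ⟨⟨trivial, trivial⟩, trivial, trivial⟩
      fun M hM h => Model.sat_notPhiCE_iff.2 (Model.not_sat_phiCE_of_sat_manyNotA hM.2 h)
    have hσ := hsig.trans (Form.sig_manyNotA_inter_sig_notPhiCE_subset n)
    have hψ : (Model.star Model.phiLabels).Sat ψ := (Model.star_phiLabels_sat_iff n hML hσ).2 <|
      hmany _ (Model.star_manyNotALabels_mem_treeC n) (Model.star_manyNotALabels_sat_manyNotA n)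
    exact Model.sat_notPhiCE_iff.1 (hphi _ (Model.star_phiLabels_mem_treeC hd) hψ)
      Model.star_phiLabels_sat_phiCE
  · rintro ⟨ψ, hML, hσ, hphi, hphi'⟩
    have hψ : (Model.star (Model.manyNotALabels 1)).Sat ψ :=
      (Model.star_phiLabels_sat_iff 1 hML hσ).1 <|
        hphi _ (Model.star_phiLabels_mem_treeC le_rfl) Model.star_phiLabels_sat_phiCE
    exact hphi' _ (Model.star_manyNotALabels_mem_treeC 1) hψ
      Model.star_manyNotALabels_one_sat_phiCE'
end

section
/- For every nondeterministic parity tree automaton A over T^d, there exists a nondeterministic parity tree automaton B over T^d, computable in time exponential in |A| (in particular with at most exponentially many states), such that L(B) = Quot(L(A)), where Quot(L) = { M ∈ T^d : there exist N ∈ L and a functional bisimulation Z : N → M }. -/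
/-- (Unbounded) `σ`-bisimulations between trees: they link the roots, relate only points of
equal depth, and satisfy the base (w.r.t. `σ`), forth and back conditions. -/
structure IsSigBisim (M M' : Model) (σ : Set ℕ) (Z : M.W → M'.W → Prop) : Prop where
  root : Z M.root M'.root
  depthEq : ∀ ⦃w w'⦄, Z w w' → ∃ k, M.stepsTo k w ∧ M'.stepsTo k w'
  base : ∀ ⦃w w'⦄, Z w w' → ∀ p ∈ σ, (M.val w p ↔ M'.val w' p)
  forth : ∀ ⦃w w'⦄, Z w w' → ∀ v, M.R w v → ∃ v', M'.R w' v' ∧ Z v v'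
  back : ∀ ⦃w w'⦄, Z w w' → ∀ v', M'.R w' v' → ∃ v, M.R w v ∧ Z v v'

/-- Nondeterministic parity tree automata (NPTA) with alphabet `2^σ`. -/
structure NPTA (σ : Set ℕ) : Type 1 where
  Q : Type
  fin : Fintype Q
  qI : Q
  δ : Q → Set ℕ → Set (List Q)
  rank : Q → ℕ

/-- The number of states of an automaton. -/
def NPTA.card {σ : Set ℕ} (A : NPTA σ) : ℕ := @Fintype.card A.Q A.fin

/-- A run of `A` on `M`: the root gets the initial state, and at every point the
tuple of states of the children is a legal transition for the point's `σ`-letter. -/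
def IsRun {σ : Set ℕ} (A : NPTA σ) (M : Model) (ρ : M.W → A.Q) : Prop :=
  ρ M.root = A.qI ∧
  ∀ w : M.W, ∃ l : List M.W, l.Nodup ∧ (∀ v, v ∈ l ↔ M.R w v) ∧
    l.map ρ ∈ A.δ (ρ w) (σ ∩ {p | M.val w p})

/-- The parity condition: the largest priority occurring infinitely often is even. -/
def ParityGood (r : ℕ → ℕ) : Prop :=
  ∃ m, Even m ∧ (∀ N, ∃ i, N ≤ i ∧ r i = m) ∧ (∀ k, m < k → ∃ N, ∀ i, N ≤ i → r i ≠ k)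

/-- Accepting runs: every infinite path satisfies the parity condition. -/
def IsAccRun {σ : Set ℕ} (A : NPTA σ) (M : Model) (ρ : M.W → A.Q) : Prop :=
  IsRun A M ρ ∧
  ∀ π : ℕ → M.W, (∀ i, M.R (π i) (π (i+1))) → ParityGood fun i => A.rank (ρ (π i))

/-- `M ⊨ A`: `A` has an accepting run on `M`. -/
def SatA {σ : Set ℕ} (M : Model) (A : NPTA σ) : Prop := ∃ ρ, IsAccRun A M ρ

/-!
If `M` is a quotient of a tree accepted by `A`, there is an accepting run whose behaviour at a point
of the tree depends only on the point `w` of `M` below it and on the state `q` there: by the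
characterization of the parity condition by signatures (progress measures with values in a
well-order), every occurrence of `(w, q)` can copy an occurrence of minimal signature. Such a
positional run is a labelling of `M` by a set of states and a choice of transitions for each of
them; unravelling it gives back a tree in `L(A)` with quotient `M`. So it remains to recognize the
labellings all of whose traces satisfy the parity condition.

Traces split and merge, so a tree may carry unboundedly many of them. By the signatures, their
parity condition says that certain values of the pairs of states decrease in a well-order, and an
automaton need only remember how these values compare, together with their ages: an infinitely
descending chain exists if and only if some value, followed along its floors, survives forever and
decreases infinitely often, which a parity condition on the ages detects as in Safra's construction.
This takes `2 ^ poly(|A|)` states.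
-/

open Filter Relation

/-! ### Sequences and the parity condition -/

/-- The largest value that a sequence attains infinitely often (its limsup, if that is attained).
The parity condition asks for an even dominant value. -/
structure IsDominant (r : ℕ → ℕ) (m : ℕ) : Prop where
  frequently_eq : ∃ᶠ i in atTop, r i = m
  eventually_le : ∀ᶠ i in atTop, r i ≤ m

theorem exists_isDominant {r : ℕ → ℕ} {b : ℕ} (hb : ∀ i, r i ≤ b) : ∃ m, IsDominant r m := by
  classical
  have hex : ∃ m, ∀ᶠ i in atTop, r i ≤ m := ⟨b, .of_forall hb⟩
  refine ⟨Nat.find hex, fun hne => ?_, Nat.find_spec hex⟩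
  have hlt : ∀ᶠ i in atTop, r i < Nat.find hex := by
    filter_upwards [hne, Nat.find_spec hex] with i hi hle using lt_of_le_of_ne hle hi
  obtain ⟨i, hi⟩ := hlt.exists
  refine Nat.find_min hex (Nat.sub_one_lt (Nat.ne_zero_of_lt hi)) ?_
  filter_upwards [hlt] with i hi using Nat.le_sub_one_of_lt hi

theorem parityGood_iff {r : ℕ → ℕ} :
    ParityGood r ↔
      ∃ m, Even m ∧ (∃ᶠ i in atTop, r i = m) ∧ ∀ k, m < k → ∀ᶠ i in atTop, r i ≠ k := by
  simp only [ParityGood, frequently_atTop, eventually_atTop]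

theorem IsDominant.parityGood_iff_even {r : ℕ → ℕ} {m : ℕ} (h : IsDominant r m) :
    ParityGood r ↔ Even m := by
  rw [parityGood_iff]
  refine ⟨fun ⟨m', heven, hfreq, hne⟩ => ?_, fun hm => ⟨m, hm, h.frequently_eq, fun k hk => ?_⟩⟩
  · obtain ⟨i, rfl, hle⟩ := (hfreq.and_eventually h.eventually_le).exists
    rcases hle.eq_or_lt with heq | hlt
    · exact heq ▸ heven
    · exact absurd (hne m hlt) h.frequently_eq
  · filter_upwards [h.eventually_le] with i hi using (hi.trans_lt hk).ne

theorem parityGood_succ_iff {r : ℕ → ℕ} : ParityGood (fun i => r (i + 1)) ↔ ParityGood r := by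
  have hfreq (m : ℕ) : (∃ᶠ i in atTop, r (i + 1) = m) ↔ ∃ᶠ i in atTop, r i = m := by
    conv_rhs => rw [← map_add_atTop_eq_nat 1, frequently_map]
  have hne (k : ℕ) : (∀ᶠ i in atTop, r (i + 1) ≠ k) ↔ ∀ᶠ i in atTop, r i ≠ k := by
    conv_rhs => rw [← map_add_atTop_eq_nat 1, eventually_map]
  simp only [parityGood_iff, hfreq, hne]

theorem eventually_eq_of_eventually_succ_le {L : Type*} [PartialOrder L] [WellFoundedLT L]
    {x : ℕ → L} (hx : ∀ᶠ t in atTop, x (t + 1) ≤ x t) : ∃ e, ∀ᶠ t in atTop, x t = e := by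
  obtain ⟨n, hn⟩ := eventually_atTop.1 hx
  let y : ℕ →o Lᵒᵈ := ⟨fun s => OrderDual.toDual (x (n + s)),
    monotone_nat_of_le_succ fun s => hn (n + s) (Nat.le_add_right n s)⟩
  obtain ⟨k, hk⟩ := WellFoundedGT.monotone_chain_condition y
  refine ⟨x (n + k), eventually_atTop.2 ⟨n + k, fun t ht => ?_⟩⟩
  obtain ⟨s, rfl⟩ := Nat.exists_eq_add_of_le (le_of_add_le_left ht)
  exact (hk s (Nat.add_le_add_iff_left.1 ht)).symm

theorem eventually_not_succ_lt {L : Type*} [PartialOrder L] [WellFoundedLT L]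
    {x : ℕ → L} (hx : ∀ᶠ t in atTop, x (t + 1) ≤ x t) : ∀ᶠ t in atTop, ¬ x (t + 1) < x t := by
  obtain ⟨e, he⟩ := eventually_eq_of_eventually_succ_le hx
  filter_upwards [he, (tendsto_add_atTop_nat 1).eventually he] with t ht ht'
  rw [ht, ht']
  exact lt_irrefl e

/-! ### Progress measures -/

theorem exists_path_frequently_mem {V : Type*} {P : V → V → Prop} {F S : Set V}
    (hS : S.Nonempty) (h : ∀ a ∈ S, ∃ c ∈ F, ReflTransGen P a c ∧ ∃ b ∈ S, P c b) :
    ∃ π : ℕ → V, (∀ i, P (π i) (π (i + 1))) ∧ ∃ᶠ i in atTop, π i ∈ F := by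
  classical
  let goal : Set V := {c | c ∈ F ∧ ∃ b ∈ S, P c b}
  let pre : Set V → Set V := fun X => {a | ∃ b ∈ X, P a b}
  let T : Set V := {a | ∃ n, a ∈ pre^[n] goal}
  have hST : S ⊆ T := fun a ha => by
    obtain ⟨c, hc, hac, hgoal⟩ := h a ha
    clear ha
    induction hac using ReflTransGen.head_induction_on with
    | refl => exact ⟨0, hc, hgoal⟩
    | head hab _ ih =>
      obtain ⟨n, hn⟩ := ih
      exact ⟨n + 1, by rw [Function.iterate_succ_apply']; exact ⟨_, hn, hab⟩⟩
  let dist : T → ℕ := fun a => Nat.find a.2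
  have hnext (a : T) : ∃ b : T, P a b ∧ (a.1 ∉ F → dist b < dist a) := by
    have hspec : a.1 ∈ pre^[dist a] goal := Nat.find_spec a.2
    rcases hd : dist a with _ | n
    · obtain ⟨ha, b, hb, hab⟩ : a.1 ∈ goal := by rwa [hd] at hspec
      exact ⟨⟨b, hST hb⟩, hab, fun hna => absurd ha hna⟩
    · rw [hd, Function.iterate_succ_apply'] at hspec
      obtain ⟨b, hb, hab⟩ := hspec
      exact ⟨⟨b, n, hb⟩, hab, fun _ => Nat.lt_succ_of_le (Nat.find_min' _ hb)⟩
  choose next hP hdist using hnext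
  obtain ⟨a₀, ha₀⟩ := hS
  let π : ℕ → T := fun t => next^[t] ⟨a₀, hST ha₀⟩
  have hπ (t : ℕ) : π (t + 1) = next (π t) := Function.iterate_succ_apply' _ _ _
  refine ⟨fun t => π t, fun t => ?_, fun hF => ?_⟩
  · simpa only [hπ] using hP (π t)
  have hlt : ∀ᶠ t in atTop, dist (π (t + 1)) < dist (π t) := by
    filter_upwards [hF] with t ht using hπ t ▸ hdist (π t) ht
  have hnot := eventually_not_succ_lt (x := fun t => dist (π t)) (hlt.mono fun _ ht => ht.le)
  obtain ⟨t, ht, hnt⟩ := (hlt.and hnot).exists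
  exact hnt ht

/-- The measure of `a` is its rank for the relation that links `a` to the endpoints of all paths
from `a` whose last edge leaves `F`. -/
theorem exists_progress_measure {V : Type} {P : V → V → Prop} {F : Set V}
    (h : ∀ π : ℕ → V, (∀ i, P (π i) (π (i + 1))) → ¬ ∃ᶠ i in atTop, π i ∈ F) :
    ∃ x : V → Ordinal.{0}, ∀ a b, P a b → x b ≤ x a ∧ (a ∈ F → x b < x a) := by
  let lt : V → V → Prop := fun b a => ∃ c ∈ F, ReflTransGen P a c ∧ P c b
  have : IsWellFounded V lt := by
    refine ⟨⟨fun a₀ => by_contra fun ha₀ => ?_⟩⟩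
    obtain ⟨π, hπ, hF⟩ := exists_path_frequently_mem (P := P) (F := F) (S := {a | ¬ Acc lt a})
      ⟨a₀, ha₀⟩ fun a ha => by
        by_contra! hcon
        exact ha (.intro a fun b ⟨c, hc, hac, hcb⟩ => not_not.1 fun hb => hcon c hc hac b hb hcb)
    exact h π hπ hF
  refine ⟨IsWellFounded.rank lt, fun a b hab => ⟨?_, fun ha => ?_⟩⟩
  · rw [IsWellFounded.rank_eq lt b]
    refine Ordinal.iSup_le fun ⟨b', c, hc, hbc, hcb'⟩ => Order.succ_le_of_lt ?_
    exact IsWellFounded.rank_lt_of_rel (r := lt) ⟨c, hc, .head hab hbc, hcb'⟩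
  · exact IsWellFounded.rank_lt_of_rel (r := lt) ⟨a, ha, .refl, hab⟩

/-! ### Signatures -/

/-- Vectors of ordinals indexed by priorities, compared lexicographically with the largest priority
being the most significant (the signatures of Streett and Emerson). -/
abbrev Signature (b : ℕ) : Type 1 := Colex (Fin (b + 1) → Ordinal.{0})

namespace Signature

variable {b m : ℕ} {s s' : Signature b}

-- The linear order on `Colex` is that of a dual `Lex`; instance search does not identify its `<`
-- with the one of `Colex`.
instance : @WellFoundedLT (Signature b) (Pi.Colex.linearOrder).toLT :=
  inferInstanceAs (WellFoundedLT (Signature b))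

/-- Resets the entries of a signature at priorities below `m`. -/
noncomputable def truncate (m : ℕ) (s : Signature b) : Signature b :=
  toColex fun i => if m ≤ (i : ℕ) then ofColex s i else 0

theorem truncate_apply_of_le {i : Fin (b + 1)} (hi : m ≤ (i : ℕ)) : truncate m s i = s i :=
  if_pos hi

theorem truncate_apply_of_lt {i : Fin (b + 1)} (hi : (i : ℕ) < m) : truncate m s i = 0 :=
  if_neg hi.not_ge

theorem truncate_mono (m : ℕ) : Monotone (truncate m : Signature b → Signature b) := by
  intro s s' hle
  rcases hle.eq_or_lt with rfl | ⟨i, heq, hlt⟩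
  · exact le_rfl
  have heq' (j : Fin (b + 1)) (hj : m ≤ (j : ℕ)) (hij : i < j) :
      truncate m s j = truncate m s' j := by
    rw [truncate_apply_of_le hj, truncate_apply_of_le hj, heq j hij]
  rcases le_or_gt m i with hi | hi
  · refine le_of_lt ⟨i, fun j hj => heq' j (hi.trans (Fin.le_def.1 hj.le)) hj, ?_⟩
    rwa [truncate_apply_of_le hi, truncate_apply_of_le hi]
  · refine le_of_eq (funext fun j => ?_)
    rcases le_or_gt m j with hj | hj
    · exact heq' j hj (Fin.lt_def.2 (hi.trans_le hj))
    · rw [truncate_apply_of_lt hj, truncate_apply_of_lt hj]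

theorem truncate_le_truncate (h : ∀ i : Fin (b + 1), m ≤ i → s i ≤ s' i) :
    truncate m s ≤ truncate m s' := by
  refine Pi.toColex_monotone fun i => ?_
  split_ifs with hi
  exacts [h i hi, le_rfl]

theorem truncate_lt_truncate (h : ∀ i : Fin (b + 1), m ≤ i → s i ≤ s' i) {i : Fin (b + 1)}
    (hi : m ≤ i) (hlt : s i < s' i) : truncate m s < truncate m s' := by
  refine lt_of_le_of_ne (truncate_le_truncate h) fun heq => hlt.ne ?_
  calc s i = truncate m s i := (truncate_apply_of_le hi).symm
    _ = truncate m s' i := by rw [heq]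
    _ = s' i := truncate_apply_of_le hi

end Signature

open Signature

/-- Signatures witnessing that the parity condition holds along all infinite `R`-paths: along an
edge out of `v`, the truncation at any `m ≥ r v` does not increase, and it drops if `m = r v` is
odd. -/
def IsParityMeasure {V : Type*} (R : V → V → Prop) (r : V → ℕ) {b : ℕ} (T : V → Signature b) :
    Prop :=
  ∀ v v', R v v' → ∀ m, r v ≤ m → truncate m (T v') ≤ truncate m (T v) ∧
    (r v = m → Odd m → truncate m (T v') < truncate m (T v))

theorem IsParityMeasure.parityGood {V : Type*} {R : V → V → Prop} {r : V → ℕ} {b : ℕ}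
    {T : V → Signature b} (hT : IsParityMeasure R r T) (hb : ∀ v, r v ≤ b) {π : ℕ → V}
    (hπ : ∀ i, R (π i) (π (i + 1))) : ParityGood fun i => r (π i) := by
  obtain ⟨m, hm⟩ := exists_isDominant fun i => hb (π i)
  refine hm.parityGood_iff_even.2 (Nat.not_odd_iff_even.1 fun hodd => ?_)
  have hle : ∀ᶠ i in atTop, truncate m (T (π (i + 1))) ≤ truncate m (T (π i)) := by
    filter_upwards [hm.eventually_le] with i hi using (hT _ _ (hπ i) m hi).1
  have hnot := eventually_not_succ_lt (x := fun i => truncate m (T (π i))) hle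
  obtain ⟨i, hi, hni⟩ := (hm.frequently_eq.and_eventually hnot).exists
  exact hni ((hT _ _ (hπ i) m hi.le).2 hi hodd)

theorem exists_isParityMeasure {V : Type} {R : V → V → Prop} {r : V → ℕ} {b : ℕ}
    (hb : ∀ v, r v ≤ b)
    (h : ∀ π : ℕ → V, (∀ i, R (π i) (π (i + 1))) → ParityGood fun i => r (π i)) :
    ∃ T : V → Signature b, IsParityMeasure R r T := by
  have hprogress (m : ℕ) : ∃ x : V → Ordinal.{0}, ∀ v v', R v v' ∧ r v ≤ m →
      x v' ≤ x v ∧ (v ∈ {v | r v = m ∧ Odd m} → x v' < x v) := by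
    refine exists_progress_measure fun π hπ hfreq => ?_
    have hdom : IsDominant (fun i => r (π i)) m :=
      ⟨hfreq.mono fun _ hi => hi.1, .of_forall fun i => (hπ i).2⟩
    obtain ⟨i, -, hodd⟩ := hfreq.exists
    exact Nat.not_even_iff_odd.2 hodd (hdom.parityGood_iff_even.1 (h π fun i => (hπ i).1))
  choose x hx using hprogress
  refine ⟨fun v => toColex fun i => x i v, fun v v' hvv' m hm => ?_⟩
  have hle (i : Fin (b + 1)) (hi : m ≤ i) : x i v' ≤ x i v := (hx i v v' ⟨hvv', hm.trans hi⟩).1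
  refine ⟨truncate_le_truncate hle, fun heq hodd => ?_⟩
  exact truncate_lt_truncate hle (i := ⟨m, Nat.lt_succ_of_le (heq ▸ hb v)⟩) le_rfl
    ((hx m v v' ⟨hvv', hm⟩).2 ⟨heq, hodd⟩)

/-- The points `rep k` are those of minimal signature in the fibres of `κ`. -/
theorem IsParityMeasure.exists_section {V K : Type*} [Nonempty V] {R : V → V → Prop} {r : V → ℕ}
    {b : ℕ} {T : V → Signature b} (hT : IsParityMeasure R r T) {κ : V → K} {s : K → ℕ}
    (hs : ∀ v, s (κ v) = r v) :
    ∃ rep : K → V, (∀ k ∈ Set.range κ, κ (rep k) = k) ∧ IsParityMeasure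
      (fun k k' => k ∈ Set.range κ ∧ ∃ v', R (rep k) v' ∧ κ v' = k') s (T ∘ rep) := by
  have hmin (k : K) : ∃ v, k ∈ Set.range κ → κ v = k ∧ ∀ v', κ v' = k → T v ≤ T v' := by
    by_cases hk : {v | κ v = k}.Nonempty
    · exact ⟨Function.argminOn T _ hk, fun _ => ⟨Function.argminOn_mem T _ hk,
        fun v' hv' => Function.argminOn_le T _ hv'⟩⟩
    · exact ⟨Classical.arbitrary V, fun h => absurd h hk⟩
  choose rep hrep using hmin
  refine ⟨rep, fun k hk => (hrep k hk).1, ?_⟩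
  rintro k _ ⟨hk, v', hv', rfl⟩ m hm
  have hr : r (rep k) = s k := by rw [← hs, (hrep k hk).1]
  have hle := truncate_mono m ((hrep _ ⟨v', rfl⟩).2 v' rfl)
  obtain ⟨hle', hlt'⟩ := hT _ v' hv' m (hr.trans_le hm)
  exact ⟨hle.trans hle', fun heq hodd => hle.trans_lt (hlt' (hr.trans heq) hodd)⟩

/-! ### Orbits and ages -/

section Orbit

variable {I : Type*}

/-- `o` is an orbit of the time-dependent map `g` from time `n` on; its earlier values are
arbitrary. -/
def IsOrbit (g : ℕ → I → I) (n : ℕ) (o : ℕ → I) : Prop := ∀ t, n ≤ t → o (t + 1) = g t (o t)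

theorem exists_isOrbit (g : ℕ → I → I) (n : ℕ) (p : I) : ∃ o, o n = p ∧ IsOrbit g n o := by
  let o' : ℕ → I := fun s => Nat.rec p (fun s y => g (n + s) y) s
  refine ⟨fun t => o' (t - n), congrArg o' (Nat.sub_self n), fun t ht => ?_⟩
  obtain ⟨s, rfl⟩ := Nat.exists_eq_add_of_le ht
  simp only [Nat.add_assoc, Nat.add_sub_cancel_left, o']

end Orbit

section Age

variable {I : Type*} {N : ℕ}

/-- One step of an age record, where `g` moves the objects and age `0` is the oldest: ages never
increase, and once an object moves to a smaller age, so do all younger ones. -/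
structure AgeStep (g : I → I) (a a' : I ↪ Fin N) : Prop where
  le : ∀ p, a' (g p) ≤ a p
  lt_of_lt : ∀ p₀ p, a' (g p₀) < a p₀ → a p₀ ≤ a p → a' (g p) < a p

open Classical in
/-- The priority contributed by one object in a step: even if it moves to a smaller age, odd if it
keeps its age and lies in `D`; older objects contribute larger priorities. -/
noncomputable def eventPriority (g : I → I) (D : Set I) (a a' : I ↪ Fin N) (p : I) : ℕ :=
  if a' (g p) < a p then 2 * (N - a p) else if p ∈ D then 2 * (N - a p) - 1 else 0

/-- The priority of a step of an age record: the largest priority contributed by an object. -/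
noncomputable def stepPriority [Fintype I] (g : I → I) (D : Set I) (a a' : I ↪ Fin N) : ℕ :=
  Finset.univ.sup (eventPriority g D a a')

section Priority

variable [Fintype I] {g : I → I} {D : Set I} {a a' : I ↪ Fin N}

theorem stepPriority_le : stepPriority g D a a' ≤ 2 * N := by
  refine Finset.sup_le fun p _ => ?_
  unfold eventPriority
  split_ifs <;> lia

theorem le_stepPriority_of_lt {p : I} (hlt : a' (g p) < a p) :
    2 * (N - a p) ≤ stepPriority g D a a' := by
  have hle := Finset.le_sup (f := eventPriority g D a a') (Finset.mem_univ p)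
  rwa [eventPriority, if_pos hlt] at hle

theorem le_stepPriority_of_mem {p : I} (hp : p ∈ D) :
    2 * (N - a p) - 1 ≤ stepPriority g D a a' := by
  refine le_trans ?_ (Finset.le_sup (f := eventPriority g D a a') (Finset.mem_univ p))
  rw [eventPriority, if_pos hp]
  split_ifs <;> lia

theorem exists_stepPriority_eq (hpos : 0 < stepPriority g D a a') :
    ∃ p, (a' (g p) < a p ∧ stepPriority g D a a' = 2 * (N - a p)) ∨
      (p ∈ D ∧ stepPriority g D a a' = 2 * (N - a p) - 1) := by
  have hne : (Finset.univ : Finset I).Nonempty :=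
    Finset.nonempty_of_ne_empty fun hempty => by simp [stepPriority, hempty] at hpos
  obtain ⟨p, -, hp⟩ := Finset.exists_mem_eq_sup _ hne (eventPriority g D a a')
  change stepPriority g D a a' = eventPriority g D a a' p at hp
  refine ⟨p, ?_⟩
  unfold eventPriority at hp
  split_ifs at hp with hlt hD
  · exact .inl ⟨hlt, hp⟩
  · exact .inr ⟨hD, hp⟩
  · exact absurd hp hpos.ne'

end Priority

section Sequence

variable {g : ℕ → I → I} {D : ℕ → Set I} {a : ℕ → I ↪ Fin N}

theorem IsOrbit.age_eventually_eq (ha : ∀ t, AgeStep (g t) (a t) (a (t + 1))) {n : ℕ} {o : ℕ → I}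
    (ho : IsOrbit g n o) : ∃ e, ∀ᶠ t in atTop, a t (o t) = e := by
  refine eventually_eq_of_eventually_succ_le ?_
  filter_upwards [eventually_ge_atTop n] with t ht
  rw [ho t ht]
  exact (ha t).le _

theorem exists_infinite_eventually_eq (ha : ∀ t, AgeStep (g t) (a t) (a (t + 1))) {o : ℕ → ℕ → I}
    (ho : ∀ j, IsOrbit g j (o j)) :
    ∃ K : Set ℕ, K.Infinite ∧ ∀ i ∈ K, ∀ j ∈ K, ∀ᶠ t in atTop, o i t = o j t := by
  choose e he using fun j => (ho j).age_eventually_eq ha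
  obtain ⟨e₀, hK⟩ := Finite.exists_infinite_fiber e
  refine ⟨e ⁻¹' {e₀}, Set.infinite_coe_iff.1 hK, fun i hi j hj => ?_⟩
  filter_upwards [he i, he j] with t hti htj
  exact (a t).injective (hti.trans ((hi : e i = e₀).trans (hj : e j = e₀).symm) |>.trans htj.symm)

theorem IsOrbit.eventually_notMem [Fintype I] (ha : ∀ t, AgeStep (g t) (a t) (a (t + 1)))
    (hgood : ParityGood fun t => stepPriority (g t) (D t) (a t) (a (t + 1))) {n : ℕ} {o : ℕ → I}
    (ho : IsOrbit g n o) : ∀ᶠ t in atTop, o t ∉ D t := by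
  by_contra hD
  obtain ⟨e, he⟩ := ho.age_eventually_eq ha
  obtain ⟨m, hm⟩ := exists_isDominant fun t => stepPriority_le (D := D t) (a := a t)
  obtain ⟨j, hj⟩ := hm.parityGood_iff_even.1 hgood
  have hage : ∀ᶠ t in atTop, a t (o t) = e ∧ a (t + 1) (g t (o t)) = e := by
    filter_upwards [he, (tendsto_add_atTop_nat 1).eventually he, eventually_ge_atTop n]
      with t ht ht' hnt using ⟨ht, ho t hnt ▸ ht'⟩
  have hle : 2 * (N - e) ≤ m := by
    obtain ⟨t, ht, hte, htm⟩ :=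
      (Filter.Frequently.and_eventually hD (he.and hm.eventually_le)).exists
    have := (le_stepPriority_of_mem ht).trans htm
    rw [hte] at this
    lia
  obtain ⟨t, htm, hte, hte'⟩ := (hm.frequently_eq.and_eventually hage).exists
  obtain ⟨p, ⟨hlt, hp⟩ | ⟨-, hp⟩⟩ := exists_stepPriority_eq (a := a t) (D := D t)
    (a' := a (t + 1)) (g := g t) (by lia)
  · refine ((ha t).lt_of_lt p (o t) hlt ?_).ne (hte'.trans hte.symm)
    rw [hte, Fin.le_def]
    lia
  · lia

theorem parityGood_stepPriority [Fintype I] {L : Type*} [PartialOrder L] [WellFoundedLT L]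
    (ha : ∀ t, AgeStep (g t) (a t) (a (t + 1))) {x : ℕ → I → L}
    (hx : ∀ t p, x (t + 1) (g t p) ≤ x t p) (hxD : ∀ t, ∀ p ∈ D t, x (t + 1) (g t p) < x t p) :
    ParityGood fun t => stepPriority (g t) (D t) (a t) (a (t + 1)) := by
  obtain ⟨m, hm⟩ := exists_isDominant fun t => stepPriority_le (D := D t) (a := a t)
  refine hm.parityGood_iff_even.2 (Nat.not_odd_iff_even.1 fun ⟨j, hj⟩ => ?_)
  have hexists {t : ℕ} (ht : stepPriority (g t) (D t) (a t) (a (t + 1)) = m) :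
      ∃ p ∈ D t, m = 2 * (N - a t p) - 1 := by
    obtain ⟨p, ⟨-, hp⟩ | ⟨hD, hp⟩⟩ := exists_stepPriority_eq (a := a t) (D := D t)
      (a' := a (t + 1)) (g := g t) (by lia)
    · lia
    · exact ⟨p, hD, ht ▸ hp⟩
  obtain ⟨s, hsm, hs⟩ := (hm.frequently_eq.and_eventually
    (eventually_forall_ge_atTop.2 hm.eventually_le)).exists
  obtain ⟨p₀, -, hp₀⟩ := hexists hsm
  obtain ⟨o, hos, ho⟩ := exists_isOrbit g s p₀
  have hage (t : ℕ) (ht : s ≤ t) : a t (o t) = a s p₀ := by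
    induction t, ht using Nat.le_induction with
    | base => rw [hos]
    | succ t ht ih =>
      rw [ho t ht, ← ih]
      refine ((ha t).le _).eq_of_not_lt fun hlt => ?_
      have := (le_stepPriority_of_lt hlt).trans (hs t ht)
      rw [ih] at this
      lia
  have hnot := eventually_not_succ_lt (x := fun t => x t (o t))
    (eventually_atTop.2 ⟨s, fun t ht => ho t ht ▸ hx t (o t)⟩)
  obtain ⟨t, htm, hnt, ht⟩ :=
    (hm.frequently_eq.and_eventually (hnot.and (eventually_ge_atTop s))).exists
  obtain ⟨p, hpD, hp⟩ := hexists htm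
  have hpo : p = o t := (a t).injective (Fin.ext (by rw [hage t ht]; lia))
  exact hnt (ho t ht ▸ hxD t _ (hpo ▸ hpD))

end Sequence

section Existence

theorem exists_merged_age (g : I → I) (a : I ↪ Fin N) :
    ∃ m : I ↪ ℕ, (∀ p, m (g p) ≤ a p) ∧ ∀ p', m p' < N → ∃ p, g p = p' ∧ m p' = a p := by
  let ages : I → Set ℕ := fun p' => insert (N + a p') {n | ∃ p, g p = p' ∧ n = a p}
  have hmem (p' : I) : sInf (ages p') ∈ ages p' := Nat.sInf_mem (Set.insert_nonempty _ _)
  have hle (p : I) : sInf (ages (g p)) ≤ a p := Nat.sInf_le (.inr ⟨p, rfl, rfl⟩)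
  refine ⟨⟨fun p' => sInf (ages p'), fun p p' (heq : sInf (ages p) = sInf (ages p')) => ?_⟩, hle,
    fun p' hp' => (hmem p').resolve_left fun h =>
      hp'.not_ge ((Nat.le_add_right _ _).trans h.ge)⟩
  rcases hmem p with h | ⟨q, rfl, h⟩ <;> rcases hmem p' with h' | ⟨q', rfl, h'⟩
  · exact a.injective (Fin.ext (by lia))
  · lia
  · lia
  · exact congrArg g (a.injective (Fin.ext (by lia)))

theorem exists_compressed_age [Fintype I] (m : I ↪ ℕ) :
    ∃ a : I ↪ Fin (Fintype.card I), (∀ p, (a p : ℕ) ≤ m p) ∧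
      ∀ p, (a p : ℕ) = m p ↔ ∀ n < m p, n ∈ Set.range m := by
  classical
  have hfin : (Set.ofPred (· ∈ Set.range m)).Finite := Set.finite_range m
  have hcard : hfin.toFinset.card = Fintype.card I := by
    rw [← Set.ncard_eq_toFinset_card _ hfin, ← Nat.card_eq_fintype_card]
    exact Set.ncard_range_of_injective m.injective
  refine ⟨⟨fun p => ⟨Nat.count (· ∈ Set.range m) (m p), ?_⟩, fun p p' heq => ?_⟩,
    fun p => Nat.count_le _, fun p => Nat.count_iff_forall⟩
  · exact hcard ▸ Nat.count_lt_card hfin (Set.mem_range_self p)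
  · exact m.injective (Nat.count_injective (Set.mem_range_self p) (Set.mem_range_self p')
      (Fin.mk.inj heq))

theorem exists_ageStep [Fintype I] (g : I → I) (a : I ↪ Fin (Fintype.card I)) :
    ∃ a' : I ↪ Fin (Fintype.card I), AgeStep g a a' := by
  obtain ⟨m, hm, hmg⟩ := exists_merged_age g a
  obtain ⟨a', hle, heq⟩ := exists_compressed_age m
  refine ⟨a', fun p => (hle _).trans (hm p), fun p₀ p hlt hp => lt_of_not_ge fun hge => ?_⟩
  have hlow (n : ℕ) (hn : n ≤ a p) : n ∈ Set.range m := by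
    have hle_gp := hle (g p)
    have hm_p := hm p
    rw [Fin.le_def] at hge
    rcases hn.lt_or_eq with hn | rfl
    · exact (heq (g p)).1 (by lia) n (by lia)
    · exact ⟨g p, by lia⟩
  obtain ⟨r, hr⟩ := hlow (a p₀) hp
  obtain ⟨q, rfl, hq⟩ := hmg r (hr ▸ (a p₀).2)
  obtain rfl : q = p₀ := a.injective (Fin.ext (hq.symm.trans hr))
  have hfull := (heq (g q)).2 fun n hn => hlow n (by rw [Fin.le_def] at hp; lia)
  exact hlt.ne (Fin.ext (hfull.trans hr))

end Existence

end Age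

/-! ### Descent records -/

/-- One step in comparing descending chains without knowledge of the values they run through. The
relations `le` and `le'` compare the values of the tracked objects, among them a smallest object
`none`, before and after the step; `g` sends an object to the largest one that is below it after the
step, and `D` contains the objects that this makes strictly smaller. Values do not increase along
`weak` and decrease along `strong`. -/
structure OrderStep {J : Type*} (weak strong : J → J → Prop) (g : Option J → Option J)
    (D : Set (Option J)) (le le' : Option J → Option J → Prop) : Prop where
  le_refl : ∀ p, le p p
  map_lt : ∀ p p₁, p ∉ D → ¬ le p p₁ → ¬ le' (g p) (g p₁)
  weak_le : ∀ p u u', weak u u' → le (some u) p → le' (some u') (g p)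
  weak_lt : ∀ p u u', p ∉ D → weak u u' → ¬ le p (some u) → ¬ le' (g p) (some u')
  strong_lt : ∀ p u u', p ∉ D → strong u u' → le (some u) p → ¬ le' (g p) (some u')

theorem OrderStep.exists_forall_orbit_not_le {J : Type*} {weak strong : ℕ → J → J → Prop}
    {g : ℕ → Option J → Option J} {D : ℕ → Set (Option J)} {le : ℕ → Option J → Option J → Prop}
    (h : ∀ t, OrderStep (weak t) (strong t) (g t) (D t) (le t) (le (t + 1))) {u : ℕ → J} {j : ℕ}
    (hweak : ∀ t, j ≤ t → weak t (u t) (u (t + 1)))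
    (hstrong : ∃ᶠ t in atTop, strong t (u t) (u (t + 1))) {o : ℕ → Option J}
    (hoj : o j = some (u j)) (ho : IsOrbit g j o) (hD : ∀ᶠ t in atTop, o t ∉ D t) :
    ∃ i, ∀ j', i < j' → ∀ o', o' j' = some (u j') → IsOrbit g j' o' →
      ∀ t, j' ≤ t → ¬ le t (o t) (o' t) := by
  have hbelow (t : ℕ) (ht : j ≤ t) : le t (some (u t)) (o t) := by
    induction t, ht using Nat.le_induction with
    | base => exact hoj ▸ (h j).le_refl _
    | succ t ht ih => exact ho t ht ▸ (h t).weak_le _ _ _ (hweak t ht) ih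
  obtain ⟨i, hi, hDi, hji⟩ := (hstrong.and_eventually
    ((eventually_forall_ge_atTop.2 hD).and (eventually_ge_atTop j))).exists
  have habove (t : ℕ) (ht : i + 1 ≤ t) : ¬ le t (o t) (some (u t)) := by
    induction t, ht using Nat.le_induction with
    | base => exact ho i hji ▸ (h i).strong_lt _ _ _ (hDi i le_rfl) hi (hbelow i hji)
    | succ t ht ih =>
      have hjt : j ≤ t := by lia
      exact ho t hjt ▸ (h t).weak_lt _ _ _ (hDi t (by lia)) (hweak t hjt) ih
  refine ⟨i, fun j' hj' o' hoj' ho' t ht => ?_⟩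
  induction t, ht using Nat.le_induction with
  | base => exact hoj' ▸ habove j' hj'
  | succ t ht ih =>
    rw [ho t (by lia), ho' t ht]
    exact (h t).map_lt _ _ (hDi t (by lia)) ih

/-- `g` sends every index `p` to an index of the largest value of `x'` that is at most `x p`. -/
def IsFloorMap {I L : Type*} [Preorder L] (x x' : I → L) (g : I → I) : Prop :=
  ∀ p, IsGreatest (Set.range x' ∩ Set.Iic (x p)) (x' (g p))

theorem exists_isFloorMap {I L : Type*} [Finite I] [LinearOrder L] {x x' : I → L}
    (h : ∃ p', ∀ p, x' p' ≤ x p) : ∃ g, IsFloorMap x x' g := by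
  obtain ⟨p', hp'⟩ := h
  have hmax (p : I) : ∃ q, IsGreatest (Set.range x' ∩ Set.Iic (x p)) (x' q) := by
    obtain ⟨q, hq, hmax⟩ := Set.exists_max_image {q | x' q ≤ x p} x' (Set.toFinite _) ⟨p', hp' p⟩
    refine ⟨q, ⟨Set.mem_range_self q, hq⟩, ?_⟩
    rintro _ ⟨⟨q', rfl⟩, hq'⟩
    exact hmax q' hq'
  choose g hg using hmax
  exact ⟨g, hg⟩

theorem IsFloorMap.orderStep {J L : Type*} [LinearOrder L] {x x' : Option J → L}
    {g : Option J → Option J} (hg : IsFloorMap x x' g) {weak strong : J → J → Prop}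
    (hweak : ∀ u u', weak u u' → x' (some u') ≤ x (some u))
    (hstrong : ∀ u u', strong u u' → x' (some u') < x (some u)) :
    OrderStep weak strong g {p | x' (g p) < x p} (fun p q => x p ≤ x q)
      (fun p q => x' p ≤ x' q) := by
  have heq {p : Option J} (hp : p ∉ {p | x' (g p) < x p}) : x' (g p) = x p :=
    (hg p).1.2.eq_of_not_lt hp
  refine ⟨fun p => le_rfl, fun p p₁ hp hlt => ?_, fun p u u' hu hle => ?_,
    fun p u u' hp hu hlt => ?_, fun p u u' hp hu hle => ?_⟩
  · rw [not_le] at hlt ⊢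
    exact heq hp ▸ (hg p₁).1.2.trans_lt hlt
  · exact (hg p).2 ⟨Set.mem_range_self _, (hweak u u' hu).trans hle⟩
  · rw [not_le] at hlt ⊢
    exact heq hp ▸ (hweak u u' hu).trans_lt hlt
  · rw [not_le]
    exact heq hp ▸ (hstrong u u' hu).trans_le hle

/-- The bounded memory with which an automaton checks that no branch carries an infinitely
descending chain of values indexed by `J`: a comparison of the values, an age record, and the
priority of the last step. -/
structure DescentRecord (J : Type*) [Fintype J] where
  le : Option J → Option J → Prop
  age : Option J ↪ Fin (Fintype.card (Option J))
  prio : Fin (2 * Fintype.card (Option J) + 1)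

namespace DescentRecord

variable {J : Type*} [Fintype J]

/-- The record at the root of a tree, where all values are regarded as equal. -/
noncomputable def initial (J : Type*) [Fintype J] : DescentRecord J where
  le _ _ := True
  age := (Fintype.equivFin (Option J)).toEmbedding
  prio := 0

/-- Admissible updates of the record; `weak` and `strong` are as in `OrderStep`. -/
def Step (weak strong : J → J → Prop) (r r' : DescentRecord J) : Prop :=
  ∃ g D, OrderStep weak strong g D r.le r'.le ∧ AgeStep g r.age r'.age ∧
    (r'.prio : ℕ) = stepPriority g D r.age r'.age

theorem eventually_not_strong {r : ℕ → DescentRecord J} {weak strong : ℕ → J → J → Prop}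
    (hr : ∀ t, Step (weak t) (strong t) (r t) (r (t + 1)))
    (hgood : ParityGood fun t => (r t).prio) {u : ℕ → J}
    (hu : ∀ᶠ t in atTop, weak t (u t) (u (t + 1))) :
    ∀ᶠ t in atTop, ¬ strong t (u t) (u (t + 1)) := by
  choose g D hle hage hprio using hr
  rw [← parityGood_succ_iff] at hgood
  simp only [hprio] at hgood
  refine not_frequently.1 fun hstrong => ?_
  choose o hoj ho using fun j => exists_isOrbit g j (some (u j))
  obtain ⟨K, hK, heq⟩ := exists_infinite_eventually_eq hage ho
  obtain ⟨T, hT⟩ := eventually_atTop.1 hu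
  obtain ⟨j, hjK, hTj⟩ := hK.exists_gt T
  obtain ⟨i, hi⟩ := OrderStep.exists_forall_orbit_not_le hle
    (fun t ht => hT t (hTj.le.trans ht)) hstrong (hoj j) (ho j)
    ((ho j).eventually_notMem hage hgood)
  obtain ⟨j', hj'K, hij'⟩ := hK.exists_gt i
  obtain ⟨t, ht, hjt⟩ := ((heq j hjK j' hj'K).and (eventually_ge_atTop j')).exists
  exact hi j' hij' _ (hoj j') (ho j') t hjt (ht ▸ (hle t).le_refl _)

end DescentRecord

theorem Model.IsTree.wellFounded {M : Model} (hM : M.IsTree) : WellFounded M.R := by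
  refine ⟨fun w => ?_⟩
  induction hM.1 w with
  | refl => exact .intro _ fun v hv => absurd hv (hM.2.1 v)
  | tail _ hvw ih => exact .intro _ fun v' hv' => hM.2.2 _ _ _ hvw hv' ▸ ih

theorem Model.IsTree.exists_labelling {M : Model} (hM : M.IsTree) {Y : Type*} (start : Y)
    {step : M.W → M.W → Y → Y → Prop} (h : ∀ w w' y, M.R w w' → ∃ y', step w w' y y') :
    ∃ l : M.W → Y, l M.root = start ∧ ∀ w w', M.R w w' → step w w' (l w) (l w') := by
  classical
  choose next hnext using h
  let l : M.W → Y := hM.wellFounded.fix fun w' ih =>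
    if hw : ∃ w, M.R w w' then next hw.choose w' (ih _ hw.choose_spec) hw.choose_spec else start
  refine ⟨l, ?_, fun w w' hww' => ?_⟩
  · simp only [l]
    rw [hM.wellFounded.fix_eq, dif_neg fun ⟨w, hw⟩ => hM.2.1 w hw]
  · have hex : ∃ w, M.R w w' := ⟨w, hww'⟩
    obtain rfl : w = hex.choose := hM.2.2 _ _ _ hww' hex.choose_spec
    simp only [l]
    rw [hM.wellFounded.fix_eq (x := w'), dif_pos hex]
    exact hnext _ _ _ _

namespace DescentRecord

variable {J : Type*} [Fintype J]

/-- `r'` arises from `r` by comparing the values `x'` after the step and following a floor map. -/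
def Follows {L : Type*} [Preorder L] (x x' : Option J → L) (r r' : DescentRecord J) : Prop :=
  (r'.le = fun p q => x' p ≤ x' q) ∧ ∃ g, IsFloorMap x x' g ∧ AgeStep g r.age r'.age ∧
    (r'.prio : ℕ) = stepPriority g {p | x' (g p) < x p} r.age r'.age

section Measure

variable {L : Type*} [LinearOrder L]

theorem exists_follows {x x' : Option J → L} (h : ∃ p', ∀ p, x' p' ≤ x p) (r : DescentRecord J) :
    ∃ r', Follows x x' r r' := by
  obtain ⟨g, hg⟩ := exists_isFloorMap h
  obtain ⟨a, ha⟩ := exists_ageStep g r.age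
  exact ⟨⟨_, a, ⟨_, Nat.lt_succ_of_le stepPriority_le⟩⟩, rfl, g, hg, ha, rfl⟩

theorem Follows.step {x x' : Option J → L} {r r' : DescentRecord J} (h : Follows x x' r r')
    (hle : r.le = fun p q => x p ≤ x q) {weak strong : J → J → Prop}
    (hweak : ∀ u u', weak u u' → x' (some u') ≤ x (some u))
    (hstrong : ∀ u u', strong u u' → x' (some u') < x (some u)) : Step weak strong r r' := by
  obtain ⟨hle', g, hg, hage, hprio⟩ := h
  exact ⟨g, _, hle ▸ hle' ▸ hg.orderStep hweak hstrong, hage, hprio⟩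

theorem parityGood_of_follows [WellFoundedLT L] {x : ℕ → Option J → L} {r : ℕ → DescentRecord J}
    (h : ∀ t, Follows (x t) (x (t + 1)) (r t) (r (t + 1))) : ParityGood fun t => (r t).prio := by
  choose _ g hg hage hprio using h
  rw [← parityGood_succ_iff]
  simp only [hprio]
  exact parityGood_stepPriority hage (fun t p => (hg t p).1.2) fun t p hp => hp

/-- All objects get the value `⊤` at the root, in accordance with the initial record. -/
theorem exists_labelling [WellFoundedLT L] {M : Model} (hM : M.IsTree) (x : M.W → J → L)
    {weak strong : M.W → M.W → J → J → Prop}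
    (hweak : ∀ w w' u u', weak w w' u u' → x w' u' ≤ x w u)
    (hstrong : ∀ w w' u u', strong w w' u u' → x w' u' < x w u) :
    ∃ r : M.W → DescentRecord J, r M.root = initial J ∧
      (∀ w w', M.R w w' → Step (weak w w') (strong w w') (r w) (r w')) ∧
      ∀ π : ℕ → M.W, (∀ i, M.R (π i) (π (i + 1))) → ParityGood fun i => (r (π i)).prio := by
  classical
  let y : M.W → Option J → WithTop (WithBot L) := fun w p =>
    ((p.elim ⊥ fun u => (x w u : WithBot L) : WithBot L) : WithTop (WithBot L))
  let X : M.W → Option J → WithTop (WithBot L) := fun w => if w = M.root then ⊤ else y w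
  have hroot : X M.root = ⊤ := if_pos rfl
  have hX {w w' : M.W} (hw : M.R w w') : X w' = y w' :=
    if_neg fun h : w' = M.root => hM.2.1 w (h ▸ hw)
  have hyX (w : M.W) : y w ≤ X w := by
    simp only [X]
    split_ifs
    exacts [le_top, le_rfl]
  have hbot (w w' : M.W) (p : Option J) : y w' none ≤ y w p := WithTop.coe_le_coe.2 bot_le
  obtain ⟨r, hr₀, hr⟩ := hM.exists_labelling (initial J)
    (step := fun w w' => Follows (X w) (X w')) fun w w' r hw =>
      exists_follows ⟨none, fun p => hX hw ▸ (hbot w w' p).trans (hyX w p)⟩ r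
  have hle (w : M.W) : (r w).le = fun p q => X w p ≤ X w q := by
    rcases (hM.1 w).cases_tail with rfl | ⟨v, -, hvw⟩
    · simp only [hr₀, initial, hroot, Pi.top_apply, le_refl]
    · exact (hr v w hvw).1
  refine ⟨r, hr₀, fun w w' hw => (hr w w' hw).step (hle w) (fun u u' hu => ?_) fun u u' hu => ?_,
    fun π hπ => parityGood_of_follows fun t => hr _ _ (hπ t)⟩ <;> rw [hX hw]
  · exact (WithTop.coe_le_coe.2 (WithBot.coe_le_coe.2 (hweak w w' u u' hu))).trans (hyX w _)
  · exact (WithTop.coe_lt_coe.2 (WithBot.coe_lt_coe.2 (hstrong w w' u u' hu))).trans_le (hyX w _)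

end Measure

end DescentRecord

/-! ### Traces -/

section Traces

variable {Q : Type} {rank : Q → ℕ}

/-- A pair `(q, k)` stands for the truncation at `rank k` of the signature at the state `q`. This
value must not increase along an edge from `q` to another state if `rank q ≤ rank k`. -/
def TraceWeak (rank : Q → ℕ) (E : Q → Q → Prop) (u u' : Q × Q) : Prop :=
  E u.1 u'.1 ∧ u.2 = u'.2 ∧ rank u.1 ≤ rank u.2

/-- The value of the pair `(q, k)`, see `TraceWeak`, must decrease along an edge from `q` to another
state if `rank q = rank k` is odd. -/
def TraceStrong (rank : Q → ℕ) (E : Q → Q → Prop) (u u' : Q × Q) : Prop :=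
  E u.1 u'.1 ∧ u.2 = u'.2 ∧ rank u.1 = rank u.2 ∧ Odd (rank u.2)

theorem exists_rank_le [Finite Q] (rank : Q → ℕ) : ∃ b, ∀ q, rank q ≤ b := by
  obtain ⟨b, hb⟩ := (Set.finite_range rank).bddAbove
  exact ⟨b, fun q => hb ⟨q, rfl⟩⟩

theorem DescentRecord.parityGood_trace [Fintype Q] {E : ℕ → Q → Q → Prop}
    {r : ℕ → DescentRecord (Q × Q)}
    (hr : ∀ t, Step (TraceWeak rank (E t)) (TraceStrong rank (E t)) (r t) (r (t + 1)))
    (hgood : ParityGood fun t => (r t).prio) {q : ℕ → Q} (hq : ∀ t, E t (q t) (q (t + 1))) :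
    ParityGood fun t => rank (q t) := by
  obtain ⟨b, hb⟩ := exists_rank_le rank
  obtain ⟨m, hm⟩ := exists_isDominant fun t => hb (q t)
  obtain ⟨t₀, rfl⟩ := hm.frequently_eq.exists
  refine hm.parityGood_iff_even.2 (Nat.not_odd_iff_even.1 fun hodd => ?_)
  have hnot := eventually_not_strong hr hgood (u := fun t => (q t, q t₀)) <| by
    filter_upwards [hm.eventually_le] with t ht using ⟨hq t, rfl, ht⟩
  obtain ⟨t, ht, hnt⟩ := (hm.frequently_eq.and_eventually hnot).exists
  exact hnt ⟨hq t, rfl, ht, hodd⟩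

theorem DescentRecord.exists_trace_labelling [Fintype Q] {M : Model} (hM : M.IsTree)
    {E : ∀ {w w'}, M.R w w' → Q → Q → Prop}
    (h : ∀ (π : ℕ → M.W) (hπ : ∀ t, M.R (π t) (π (t + 1))) (q : ℕ → Q),
      (∀ t, E (hπ t) (q t) (q (t + 1))) → ParityGood fun t => rank (q t)) :
    ∃ r : M.W → DescentRecord (Q × Q), r M.root = initial (Q × Q) ∧
      (∀ w w' (hw : M.R w w'),
        Step (TraceWeak rank (E hw)) (TraceStrong rank (E hw)) (r w) (r w')) ∧
      ∀ π : ℕ → M.W, (∀ i, M.R (π i) (π (i + 1))) → ParityGood fun i => (r (π i)).prio := by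
  obtain ⟨b, hb⟩ := exists_rank_le rank
  obtain ⟨T, hT⟩ := exists_isParityMeasure (V := M.W × Q) (r := fun v => rank v.2)
    (R := fun v v' => ∃ hw : M.R v.1 v'.1, E hw v.2 v'.2) (fun v => hb v.2) fun π hπ =>
      h (fun t => (π t).1) (fun t => (hπ t).1) (fun t => (π t).2) fun t => (hπ t).2
  obtain ⟨r, hr₀, hr, hgood⟩ := exists_labelling hM
    (fun w u => truncate (rank u.2) (T (w, u.1)))
    (weak := fun w w' u u' => ∃ hw : M.R w w', TraceWeak rank (E hw) u u')
    (strong := fun w w' u u' => ∃ hw : M.R w w', TraceStrong rank (E hw) u u')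
    (by
      rintro w w' ⟨q, k⟩ ⟨q', _⟩ ⟨hw, hE, rfl, hle⟩
      exact (hT _ _ ⟨hw, hE⟩ _ hle).1)
    (by
      rintro w w' ⟨q, k⟩ ⟨q', _⟩ ⟨hw, hE, rfl, heq, hodd⟩
      exact (hT _ _ ⟨hw, hE⟩ _ heq.le).2 heq hodd)
  refine ⟨r, hr₀, fun w w' hw => ?_, hgood⟩
  simpa only [exists_prop_of_true hw] using hr w w' hw

end Traces

/-! ### Unravelling -/

/-- The paths from `v₀` in the graph whose edges out of `v` are the entries of the list `ch v`. -/
inductive GraphPath {V : Type} (ch : V → List V) (v₀ : V) : V → Type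
  | nil : GraphPath ch v₀ v₀
  | snoc {v : V} (s : GraphPath ch v₀ v) (i : Fin (ch v).length) : GraphPath ch v₀ ((ch v).get i)

/-- The tree of all paths from `v₀`, where a path satisfies the propositions of its endpoint. -/
abbrev unravelling {V : Type} (ch : V → List V) (v₀ : V) (val : V → ℕ → Prop) : Model where
  W := Σ v, GraphPath ch v₀ v
  root := ⟨v₀, .nil⟩
  R s t := ∃ i, ⟨_, s.2.snoc i⟩ = t
  val s := val s.1

namespace unravelling

variable {V : Type} {ch : V → List V} {v₀ : V} {val : V → ℕ → Prop}

/-- The decomposition of a nonempty path into its initial part and its last edge. -/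
def unsnoc : (Σ v, GraphPath ch v₀ v) → Option (Σ v, GraphPath ch v₀ v × Fin (ch v).length)
  | ⟨_, .nil⟩ => none
  | ⟨_, .snoc s i⟩ => some ⟨_, s, i⟩

theorem unsnoc_of_R {s t : Σ v, GraphPath ch v₀ v} (h : (unravelling ch v₀ val).R s t) :
    (unsnoc t).map (fun x => ⟨x.1, x.2.1⟩) = some s := by
  obtain ⟨i, rfl⟩ := h
  rfl

theorem snoc_injective (s : Σ v, GraphPath ch v₀ v) :
    Function.Injective fun i => (⟨_, s.2.snoc i⟩ : Σ v, GraphPath ch v₀ v) := fun _ _ h =>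
  congrArg Prod.snd (eq_of_heq (Sigma.mk.inj (Option.some.inj (congrArg unsnoc h))).2)

theorem fst_mem_of_R {s t : Σ v, GraphPath ch v₀ v} (h : (unravelling ch v₀ val).R s t) :
    t.1 ∈ ch s.1 := by
  obtain ⟨i, rfl⟩ := h
  exact List.get_mem _ i

theorem exists_R_of_mem (s : Σ v, GraphPath ch v₀ v) {v : V} (hv : v ∈ ch s.1) :
    ∃ t, (unravelling ch v₀ val).R s t ∧ t.1 = v := by
  obtain ⟨i, rfl⟩ := List.mem_iff_get.1 hv
  exact ⟨_, ⟨i, rfl⟩, rfl⟩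

theorem isTree : (unravelling ch v₀ val).IsTree := by
  refine ⟨fun ⟨v, s⟩ => ?_, fun s h => ?_, fun t s s' h h' => ?_⟩
  · induction s with
    | nil => exact .refl
    | snoc s i ih => exact ih.tail ⟨i, rfl⟩
  · exact Option.some_ne_none s (unsnoc_of_R h).symm
  · exact Option.some.inj ((unsnoc_of_R h).symm.trans (unsnoc_of_R h'))

theorem exists_children (s : Σ v, GraphPath ch v₀ v) :
    ∃ l : List (Σ v, GraphPath ch v₀ v), l.Nodup ∧
      (∀ t, t ∈ l ↔ (unravelling ch v₀ val).R s t) ∧ l.map Sigma.fst = ch s.1 := by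
  refine ⟨List.ofFn fun i => ⟨_, s.2.snoc i⟩, List.nodup_ofFn.2 (snoc_injective s),
    fun t => List.mem_ofFn, ?_⟩
  rw [List.map_ofFn]
  exact List.ofFn_get (ch s.1)

theorem outdegLE {d : ℕ} (hd : ∀ v, (ch v).length ≤ d) : (unravelling ch v₀ val).outdegLE d := by
  rintro s ⟨u, hu, hmem⟩
  choose i hi using hmem
  have hinj : Function.Injective i := fun j j' h => hu (by rw [← hi, ← hi, h])
  have hcard := Fintype.card_le_of_injective i hinj
  simp only [Fintype.card_fin] at hcard
  exact absurd (hcard.trans (hd s.1)) (Nat.not_succ_le_self d)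

end unravelling

/-! ### Positional runs and quotients -/

instance {σ : Set ℕ} (A : NPTA σ) : Fintype A.Q := A.fin

/-- The list `P q` assigns the entries of a transition of `A` from `q`, for every state `q ∈ S`, to
children indexed by `ι`, so that each child is reached and only gets states from its set `S'`. -/
structure NPTA.IsMove {σ : Set ℕ} (A : NPTA σ) (a : Set ℕ) {ι : Type} (S : Set A.Q)
    (S' : ι → Set A.Q) (P : A.Q → List (ι × A.Q)) : Prop where
  map_snd_mem : ∀ q ∈ S, (P q).map Prod.snd ∈ A.δ q a
  snd_mem : ∀ q ∈ S, ∀ x ∈ P q, x.2 ∈ S' x.1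
  exists_mem : ∀ q ∈ S, ∀ i, ∃ q', (i, q') ∈ P q

/-- The pairs of states that a move links at the child `i`. -/
def MoveTrace {Q ι : Type} (S : Set Q) (P : Q → List (ι × Q)) (i : ι) (q q' : Q) : Prop :=
  q ∈ S ∧ (i, q') ∈ P q

/-- An accepting run of `A` on some tree with quotient `M`, folded onto `M`: all points that lie
over `w` and carry the same state use the same transition, in the same way. -/
structure PositionalRun {σ : Set ℕ} (A : NPTA σ) (M : Model) where
  supp : M.W → Set A.Q
  move : ∀ w, A.Q → List ({w' // M.R w w'} × A.Q)
  supp_root : supp M.root = {A.qI}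
  isMove : ∀ w, A.IsMove (σ ∩ {p | M.val w p}) (supp w) (fun w' => supp w'.1) (move w)
  parityGood : ∀ (π : ℕ → M.W) (hπ : ∀ t, M.R (π t) (π (t + 1))) (q : ℕ → A.Q),
    (∀ t, MoveTrace (supp (π t)) (move (π t)) ⟨π (t + 1), hπ t⟩ (q t) (q (t + 1))) →
      ParityGood fun t => A.rank (q t)

theorem isSigBisim_of_map {N M : Model} {f : N.W → M.W} (hN : ∀ v, ReflTransGen N.R N.root v)
    (hroot : f N.root = M.root) (hval : ∀ v p, N.val v p ↔ M.val (f v) p)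
    (hforth : ∀ v v', N.R v v' → M.R (f v) (f v'))
    (hback : ∀ v w, M.R (f v) w → ∃ v', N.R v v' ∧ f v' = w) :
    IsSigBisim N M Set.univ fun v w => f v = w where
  root := hroot
  depthEq := by
    rintro v _ rfl
    induction hN v with
    | refl => exact ⟨0, rfl, hroot⟩
    | tail _ hv ih =>
      obtain ⟨k, hk, hk'⟩ := ih
      exact ⟨k + 1, ⟨_, hk, hv⟩, _, hk', hforth _ _ hv⟩
  base := by
    rintro v _ rfl p -
    exact hval v p
  forth := by
    rintro v _ rfl v' hv
    exact ⟨_, hforth v v' hv, rfl⟩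
  back := by
    rintro v _ rfl w hw
    exact hback v w hw

theorem IsSigBisim.eq_root {N M : Model} (hM : M.IsTree) {σ : Set ℕ} {Z : N.W → M.W → Prop}
    (hZ : IsSigBisim N M σ Z) {v : N.W} (hv : Z v M.root) : v = N.root := by
  obtain ⟨k, hk, hk'⟩ := hZ.depthEq hv
  cases k with
  | zero => exact hk
  | succ k =>
    obtain ⟨w, -, hw⟩ := hk'
    exact absurd hw (hM.2.1 w)

namespace PositionalRun

variable {σ : Set ℕ} {A : NPTA σ} {M : Model}

section Unravelling

variable (r : PositionalRun A M)

/-- The graph on the pairs of a point and a state in its support that is given by the moves. -/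
def next (v : Σ w, r.supp w) : List (Σ w, r.supp w) :=
  (r.move v.1 v.2).attach.map fun x => ⟨x.1.1, x.1.2, (r.isMove v.1).snd_mem _ v.2.2 _ x.2⟩

variable {r}

theorem map_next (v : Σ w, r.supp w) :
    (r.next v).map (fun v' => v'.2.1) = (r.move v.1 v.2).map Prod.snd := by
  rw [next, List.map_map]
  exact List.attach_map_val (f := Prod.snd)

theorem exists_moveTrace {v v' : Σ w, r.supp w} (h : v' ∈ r.next v) :
    ∃ hw : M.R v.1 v'.1,
      MoveTrace (r.supp v.1) (r.move v.1) ⟨v'.1, hw⟩ v.2.1 v'.2.1 := by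
  obtain ⟨x, -, rfl⟩ := List.mem_map.1 h
  exact ⟨x.1.1.2, v.2.2, x.2⟩

theorem exists_mem_next (v : Σ w, r.supp w) {w : M.W} (hw : M.R v.1 w) :
    ∃ v' ∈ r.next v, v'.1 = w := by
  obtain ⟨q, hq⟩ := (r.isMove v.1).exists_mem _ v.2.2 ⟨w, hw⟩
  exact ⟨_, List.mem_map_of_mem (List.mem_attach _ ⟨_, hq⟩), rfl⟩

theorem exists_preimage (r : PositionalRun A M) {d : ℕ}
    (hA : ∀ q a l, l ∈ A.δ q a → l.length ≤ d) :
    ∃ N ∈ TreeC d, SatA N A ∧ ∃ f : N.W → M.W, IsSigBisim N M Set.univ fun v w => f v = w := by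
  have hδ (v : Σ w, r.supp w) : (r.next v).map (fun v' => v'.2.1) ∈
      A.δ v.2 (σ ∩ {p | M.val v.1 p}) :=
    map_next v ▸ (r.isMove v.1).map_snd_mem _ v.2.2
  let v₀ : Σ w, r.supp w := ⟨M.root, A.qI, r.supp_root ▸ Set.mem_singleton _⟩
  let N := unravelling r.next v₀ fun v => M.val v.1
  have hlength (v : Σ w, r.supp w) : (r.next v).length ≤ d :=
    (List.length_map _).symm.trans_le (hA _ _ _ (hδ v))
  refine ⟨N, ⟨unravelling.isTree, unravelling.outdegLE hlength⟩,
    ⟨fun s => s.1.2, ⟨rfl, fun s => ?_⟩, fun π hπ => ?_⟩, fun s => s.1.1,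
    isSigBisim_of_map unravelling.isTree.1 rfl (fun _ _ => Iff.rfl) (fun s t hst => ?_)
      fun s w hw => ?_⟩
  · obtain ⟨l, hl, hmem, hmap⟩ := unravelling.exists_children s
    refine ⟨l, hl, hmem, ?_⟩
    have hδs := hδ s.1
    rwa [← hmap, List.map_map] at hδs
  · choose hw htrace using fun t => exists_moveTrace (unravelling.fst_mem_of_R (hπ t))
    exact r.parityGood _ hw _ htrace
  · exact (exists_moveTrace (unravelling.fst_mem_of_R hst)).1
  · obtain ⟨v, hv, rfl⟩ := exists_mem_next s.1 hw
    obtain ⟨t, ht, rfl⟩ := unravelling.exists_R_of_mem s hv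
    exact ⟨t, ht, rfl⟩

end Unravelling

end PositionalRun

theorem IsRun.exists_move {σ : Set ℕ} {A : NPTA σ} {N M : Model} {ρ : N.W → A.Q}
    (hρ : IsRun A N ρ) {f : N.W → M.W} (hf : IsSigBisim N M Set.univ fun v w => f v = w) (v : N.W) :
    ∃ P : List ({w // M.R (f v) w} × A.Q),
      P.map Prod.snd ∈ A.δ (ρ v) (σ ∩ {p | M.val (f v) p}) ∧
      (∀ x ∈ P, ∃ v', N.R v v' ∧ (f v', ρ v') = (x.1.1, x.2)) ∧ ∀ i, ∃ q, (i, q) ∈ P := by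
  obtain ⟨l, -, hl, hδ⟩ := hρ.2 v
  have hmap (v' : N.W) (hv' : v' ∈ l) : M.R (f v) (f v') := by
    obtain ⟨w', hw', rfl⟩ := hf.forth rfl v' ((hl v').1 hv')
    exact hw'
  have hval : {p | N.val v p} = {p | M.val (f v) p} :=
    Set.ext fun p => hf.base rfl p (Set.mem_univ p)
  refine ⟨l.attach.map fun v' : {v' // v' ∈ l} => (⟨f v', hmap _ v'.2⟩, ρ v'), ?_,
    fun x hx => ?_, fun ⟨w, hw⟩ => ?_⟩
  · rw [List.map_map, ← hval]
    exact (List.attach_map_val (l := l) (f := ρ)).symm ▸ hδ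
  · obtain ⟨v', -, rfl⟩ := List.mem_map.1 hx
    exact ⟨v', (hl v').1 v'.2, rfl⟩
  · obtain ⟨v', hv', rfl⟩ := hf.back rfl w hw
    exact ⟨ρ v', List.mem_map_of_mem (List.mem_attach l ⟨v', (hl v').2 hv'⟩)⟩

/-- A point over `w` with state `q` moves like the representative of `(w, q)`. -/
theorem PositionalRun.nonempty_of_isSigBisim {σ : Set ℕ} {A : NPTA σ} {N M : Model} (hM : M.IsTree)
    (hN : SatA N A) {f : N.W → M.W} (hf : IsSigBisim N M Set.univ fun v w => f v = w) :
    Nonempty (PositionalRun A M) := by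
  obtain ⟨ρ, hρ, hacc⟩ := hN
  obtain ⟨b, hb⟩ := exists_rank_le A.rank
  obtain ⟨T, hT⟩ := exists_isParityMeasure (fun v => hb (ρ v)) hacc
  have : Nonempty N.W := ⟨N.root⟩
  let κ : N.W → M.W × A.Q := fun v => (f v, ρ v)
  obtain ⟨rep, hrep, hT'⟩ := hT.exists_section (κ := κ) (s := fun k => A.rank k.2) fun _ => rfl
  have hmove (w : M.W) (q : A.Q) (hq : (w, q) ∈ Set.range κ) :
      ∃ P : List ({w' // M.R w w'} × A.Q), P.map Prod.snd ∈ A.δ q (σ ∩ {p | M.val w p}) ∧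
        (∀ x ∈ P, ∃ v', N.R (rep (w, q)) v' ∧ κ v' = (x.1.1, x.2)) ∧ ∀ i, ∃ q', (i, q') ∈ P := by
    have hrep' := hrep _ hq
    generalize rep (w, q) = v at hrep' ⊢
    obtain ⟨rfl, rfl⟩ := Prod.mk.inj hrep'
    exact hρ.exists_move hf v
  choose! P hδ hfollow hback using hmove
  refine ⟨fun w => {q | (w, q) ∈ Set.range κ}, P, ?_, fun w => ⟨hδ w, fun q hq x hx => ?_, hback w⟩,
    fun π hπ q hq => ?_⟩
  · ext q
    constructor
    · rintro ⟨v, hv⟩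
      obtain ⟨hroot, rfl⟩ := Prod.mk.inj hv
      exact (congrArg ρ (hf.eq_root hM hroot)).trans hρ.1
    · rintro rfl
      exact ⟨N.root, Prod.ext hf.root hρ.1⟩
  · obtain ⟨v', -, hv'⟩ := hfollow w q hq x hx
    exact ⟨v', hv'⟩
  · refine hT'.parityGood (fun k => hb k.2) (π := fun t => (π t, q t)) fun t => ⟨(hq t).1, ?_⟩
    exact hfollow _ _ (hq t).1 _ (hq t).2

/-! ### The quotient automaton -/

namespace DescentRecord

variable {J : Type*} [Fintype J]

/-- A descent record as the triple of its components. -/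
def equivProd : DescentRecord J ≃ (Option J → Option J → Prop) ×
    (Option J ↪ Fin (Fintype.card (Option J))) × Fin (2 * Fintype.card (Option J) + 1) where
  toFun r := (r.le, r.age, r.prio)
  invFun x := ⟨x.1, x.2.1, x.2.2⟩

open Classical in
noncomputable instance : Fintype (DescentRecord J) :=
  .ofEquiv _ equivProd.symm

theorem card_eq {n : ℕ} (hn : Fintype.card (Option J) = n) :
    Fintype.card (DescentRecord J) = 2 ^ (n * n) * (n.factorial * (2 * n + 1)) := by
  classical
  rw [Fintype.card_congr equivProd, Fintype.card_prod, Fintype.card_prod, Fintype.card_fun,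
    Fintype.card_fun, Fintype.card_embedding_eq, Fintype.card_fin, Fintype.card_fin,
    Nat.descFactorial_self, Fintype.card_prop, hn, pow_mul]

theorem card_le {n : ℕ} (hn : Fintype.card (Option J) = n) :
    Fintype.card (DescentRecord J) ≤ 2 ^ (2 * n * n + 2 * n) :=
  calc Fintype.card (DescentRecord J)
    _ = 2 ^ (n * n) * (n.factorial * (2 * n + 1)) := card_eq hn
    _ ≤ 2 ^ (n * n) * ((2 ^ n) ^ n * 2 ^ (2 * n)) := by
      gcongr
      · exact n.factorial_le_pow.trans (Nat.pow_le_pow_left n.lt_two_pow_self.le n)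
      · exact Nat.lt_two_pow_self
    _ = 2 ^ (2 * n * n + 2 * n) := by ring

end DescentRecord

theorem Model.outdegLE.exists_children {M : Model} {d : ℕ} (hM : M.outdegLE d) (w : M.W) :
    ∃ l : List M.W, l.Nodup ∧ (∀ v, v ∈ l ↔ M.R w v) ∧ l.length ≤ d := by
  have hle : {v | M.R w v}.encard ≤ d := by
    by_contra! hlt
    obtain ⟨e, -⟩ := Fin.Embedding.exists_embedding_disjoint_range_of_add_le_ENat_card
      (α := {v // M.R w v}) (s := ∅) (n := d + 1)
      (by simpa [ENat.card_coe_set_eq] using! Order.add_one_le_of_lt hlt)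
    exact hM w ⟨fun i => e i, Subtype.val_injective.comp e.injective, fun i => (e i).2⟩
  have hfin : {v | M.R w v}.Finite := Set.finite_of_encard_le_coe hle
  refine ⟨hfin.toFinset.toList, Finset.nodup_toList _, fun v => by simp, ?_⟩
  rw [Finset.length_toList]
  rwa [hfin.encard_eq_coe_toFinset_card, Nat.cast_le] at hle

section QuotAutomaton

/-- The states of `quotAutomaton`: the support of a positional run at a point, together with a
record for its traces, see `TraceWeak`. -/
abbrev QuotState (Q : Type) [Fintype Q] : Type := Set Q × DescentRecord (Q × Q)

variable {σ : Set ℕ} {A : NPTA σ}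

/-- The transitions of `quotAutomaton A d`, with successors indexed by `ι`: from the state `(S, r)`,
guess a move of `A` with support `S` and update the record `r` along the traces of the move. -/
def IsQuotTransition (A : NPTA σ) (x : QuotState A.Q) (a : Set ℕ) {ι : Type}
    (y : ι → QuotState A.Q) : Prop :=
  ∃ P, A.IsMove a x.1 (fun i => (y i).1) P ∧
    ∀ i, DescentRecord.Step (TraceWeak A.rank (MoveTrace x.1 P i))
      (TraceStrong A.rank (MoveTrace x.1 P i)) x.2 (y i).2

/-- The automaton that guesses a positional run, one move per point of the tree, and checks with
descent records that all its traces satisfy the parity condition of `A`. -/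
noncomputable def quotAutomaton (A : NPTA σ) (d : ℕ) : NPTA σ where
  Q := QuotState A.Q
  fin := inferInstance
  qI := ({A.qI}, .initial _)
  δ x a := {L | L.length ≤ d ∧ IsQuotTransition A x a L.get}
  rank x := x.2.prio

theorem quotAutomaton_card_le (A : NPTA σ) (d : ℕ) :
    (quotAutomaton A d).card ≤ 2 ^ (A.card + 2) ^ 5 := by
  have hn : Fintype.card (Option (A.Q × A.Q)) = A.card * A.card + 1 := by
    rw [Fintype.card_option, Fintype.card_prod]
    rfl
  calc (quotAutomaton A d).card
    _ = 2 ^ A.card * Fintype.card (DescentRecord (A.Q × A.Q)) :=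
      (Fintype.card_prod _ _).trans (congrArg (· * _) Fintype.card_set)
    _ ≤ 2 ^ A.card * 2 ^ (2 * (A.card * A.card + 1) * (A.card * A.card + 1) +
          2 * (A.card * A.card + 1)) := by
      gcongr
      exact DescentRecord.card_le hn
    _ ≤ 2 ^ (A.card + 2) ^ 5 := by
      rw [← pow_add]
      refine Nat.pow_le_pow_right two_pos ?_
      ring_nf
      lia

theorem IsQuotTransition.comp_equiv {x : QuotState A.Q} {a : Set ℕ} {ι κ : Type}
    {y : ι → QuotState A.Q} (h : IsQuotTransition A x a y) (e : κ ≃ ι) :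
    IsQuotTransition A x a (y ∘ e) := by
  obtain ⟨P, ⟨hδ, hsupp, hback⟩, hstep⟩ := h
  have hmem (i : κ) (q q' : A.Q) : (i, q') ∈ (P q).map (Prod.map e.symm id) ↔ (e i, q') ∈ P q := by
    constructor
    · intro h
      obtain ⟨⟨j, q''⟩, hj, heq⟩ := List.mem_map.1 h
      obtain ⟨rfl, rfl⟩ := Prod.mk.inj heq
      simpa using hj
    · exact fun h => List.mem_map.2 ⟨_, h, Prod.ext (e.symm_apply_apply i) rfl⟩
  refine ⟨fun q => (P q).map (Prod.map e.symm id), ⟨fun q hq => ?_, fun q hq z hz => ?_,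
    fun q hq i => ?_⟩, fun i => ?_⟩
  · rw [List.map_map]
    exact hδ q hq
  · exact hsupp q hq _ ((hmem _ _ _).1 hz)
  · obtain ⟨q', hq'⟩ := hback q hq (e i)
    exact ⟨q', (hmem _ _ _).2 hq'⟩
  · have htrace : MoveTrace x.1 (fun q => (P q).map (Prod.map e.symm id)) i =
        MoveTrace x.1 P (e i) := by
      ext q q'
      exact and_congr_right fun _ => hmem i q q'
    exact htrace ▸ hstep (e i)

theorem isQuotTransition_get_map_iff {x : QuotState A.Q} {a : Set ℕ} {V : Type}
    {p : V → Prop} {l : List V} (hl : l.Nodup) (hmem : ∀ v, v ∈ l ↔ p v) {y : V → QuotState A.Q} :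
    IsQuotTransition A x a (l.map y).get ↔ IsQuotTransition A x a fun v : {v // p v} => y v := by
  classical
  let e : Fin (l.map y).length ≃ {v // p v} :=
    (finCongr (List.length_map y)).trans ((hl.getEquiv l).trans (Equiv.subtypeEquivRight hmem))
  have hy : (fun v : {v // p v} => y v) ∘ e = (l.map y).get := by
    ext i : 1
    simp [e]
  constructor
  · intro h
    have := h.comp_equiv e.symm
    rwa [← hy, Function.comp_assoc, e.self_comp_symm] at this
  · exact fun h => hy ▸ h.comp_equiv e

theorem isRun_quotAutomaton_iff {M : Model} {d : ℕ} (hM : M.outdegLE d)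
    {ρ : M.W → QuotState A.Q} :
    IsRun (quotAutomaton A d) M ρ ↔ ρ M.root = ({A.qI}, .initial _) ∧
      ∀ w, IsQuotTransition A (ρ w) (σ ∩ {p | M.val w p}) fun w' : {w' // M.R w w'} => ρ w' := by
  refine and_congr_right fun _ => forall_congr' fun w => ⟨?_, fun h => ?_⟩
  · rintro ⟨l, hl, hmem, -, h⟩
    exact (isQuotTransition_get_map_iff hl hmem).1 h
  · obtain ⟨l, hl, hmem, hlen⟩ := hM.exists_children w
    exact ⟨l, hl, hmem, (List.length_map _).trans_le hlen,
      (isQuotTransition_get_map_iff hl hmem).2 h⟩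

theorem satA_quotAutomaton_iff {M : Model} {d : ℕ} (hM : M ∈ TreeC d) :
    SatA M (quotAutomaton A d) ↔ Nonempty (PositionalRun A M) := by
  constructor
  · rintro ⟨ρ, hρ, hacc⟩
    obtain ⟨hroot, htrans⟩ := (isRun_quotAutomaton_iff hM.2).1 hρ
    choose P hmove hstep using htrans
    exact ⟨fun w => (ρ w).1, P, congrArg Prod.fst hroot, hmove, fun π hπ q hq =>
      DescentRecord.parityGood_trace (r := fun t => (ρ (π t)).2)
        (fun t => hstep (π t) ⟨π (t + 1), hπ t⟩) (hacc π hπ) hq⟩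
  · rintro ⟨r⟩
    obtain ⟨s, hs₀, hs, hgood⟩ := DescentRecord.exists_trace_labelling hM.1
      (E := fun {w w'} hw => MoveTrace (r.supp w) (r.move w) ⟨w', hw⟩) r.parityGood
    refine ⟨fun w => (r.supp w, s w), (isRun_quotAutomaton_iff hM.2).2
      ⟨Prod.ext r.supp_root hs₀, fun w => ?_⟩, hgood⟩
    exact ⟨r.move w, r.isMove w, fun i => hs w i i.2⟩

end QuotAutomaton

theorem stmt_13_general (d : ℕ) {σ : Set ℕ} (A : NPTA σ)
    (hA : ∀ q ch l, l ∈ A.δ q ch → l.length ≤ d) :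
    ∃ B : NPTA σ, (∀ q ch l, l ∈ B.δ q ch → l.length ≤ d) ∧
      B.card ≤ 2 ^ ((A.card + 2) ^ 5) ∧
      ∀ M ∈ TreeC d, (SatA M B ↔ ∃ N ∈ TreeC d, SatA N A ∧
        ∃ f : N.W → M.W, IsSigBisim N M Set.univ fun v w => f v = w) := by
  refine ⟨quotAutomaton A d, fun _ _ _ hl => hl.1, quotAutomaton_card_le A d, fun M hM => ?_⟩
  rw [satA_quotAutomaton_iff hM]
  constructor
  · rintro ⟨r⟩
    exact r.exists_preimage hA
  · rintro ⟨N, -, hN, f, hf⟩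
    exact PositionalRun.nonempty_of_isSigBisim hM.1 hN hf

/-- for every NPTA `A` over `T^d` there is an NPTA `B` over `T^d`, of at most
exponentially many states, recognizing the bisimulation quotients of the trees from `L(A)`. -/
theorem stmt_13 : ∃ c : ℕ, ∀ (d : ℕ) (σ : Set ℕ), σ.Finite → ∀ A : NPTA σ,
    (∀ q ch l, l ∈ A.δ q ch → l.length ≤ d) →
    ∃ B : NPTA σ, (∀ q ch l, l ∈ B.δ q ch → l.length ≤ d) ∧
      B.card ≤ 2 ^ ((A.card + 2) ^ c) ∧
      ∀ M ∈ TreeC d, (SatA M B ↔ ∃ N ∈ TreeC d, SatA N A ∧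
        ∃ f : N.W → M.W, IsSigBisim N M Set.univ fun v w => f v = w) :=
  ⟨5, fun d _ _ A hA => stmt_13_general d A hA⟩
end
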